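/- arXiv:2104.04475 — 8 statements merged into one kernel-verified Lean document; each statement's English description precedes it below -/
import Mathlib

section
/- Let G be a finitely generated group and let P ⊆ G be a regular positive cone with respect to some finite generating set of G. If H ≤ G is a subgroup of finite index, then P ∩ H is a regular positive cone of H with respect to some finite generating set of H. -/
/-!
The argument is Reidemeister–Schreier rewriting carried out by a finite automaton.

Let `Q` be the finite set of cosets of `H` and let `t q` represent the coset `q`, with
`t H = 1`. Reading a word `x₁ ⋯ xₙ` over the generators of `G` moves through cosets
`q₀ = H`, `qᵢ = xᵢ⁻¹ qᵢ₋₁`. The elements `γ (q, x) = (t q)⁻¹ x t (x⁻¹ q)` lie in `H`, and the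
product `γ (q₀, x₁) ⋯ γ (qₙ₋₁, xₙ)` telescopes to `(t q₀)⁻¹ x₁ ⋯ xₙ t qₙ`, which is
`x₁ ⋯ xₙ` exactly when the word represents an element of `H`, i.e. when `qₙ = q₀`. Hence the
finitely many `γ (q, x)` generate `H` as a monoid (`coe_lift_traced`), and the rewritings of the
words of a regular language that return to `q₀` again form a regular language (`traceDFA`),
whose evaluation is the intersection of the original evaluation with `H`.
-/

/-- A positive cone on a group `G`: a subsemigroup `P` such that
`G = P ⊔ P⁻¹ ⊔ {1}` is a disjoint union. -/
def IsPositiveCone {G : Type*} [Group G] (P : Set G) : Prop :=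
  (∀ a ∈ P, ∀ b ∈ P, a * b ∈ P) ∧
  (∀ g : G, g ∈ P ∨ g⁻¹ ∈ P ∨ g = 1) ∧
  (∀ g ∈ P, g⁻¹ ∉ P) ∧ (1 : G) ∉ P

/-- A positive cone on `G` relative to a subgroup `H`: a subsemigroup `P` with
`G = P ⊔ H ⊔ P⁻¹` a disjoint union. -/
def IsRelPositiveCone {G : Type*} [Group G] (H : Subgroup G) (P : Set G) : Prop :=
  (∀ a ∈ P, ∀ b ∈ P, a * b ∈ P) ∧
  (∀ g : G, g ∈ P ∨ g⁻¹ ∈ P ∨ g ∈ H) ∧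
  (∀ g ∈ P, g⁻¹ ∉ P) ∧ (∀ g ∈ P, g ∉ H)

/-- A positive cone of the subgroup `H`, viewed as a subset of the ambient group `G`. -/
def IsPositiveConeIn {G : Type*} [Group G] (H : Subgroup G) (P : Set G) : Prop :=
  P ⊆ (H : Set G) ∧
  (∀ a ∈ P, ∀ b ∈ P, a * b ∈ P) ∧
  (∀ h ∈ H, h ∈ P ∨ h⁻¹ ∈ P ∨ h = 1) ∧
  (∀ g ∈ P, g⁻¹ ∉ P) ∧ (1 : G) ∉ P

/-- The evaluation (image) in `G` of a language `L ⊆ X*` under a monoid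
homomorphism `π : X* → G`. -/
def evalLang {X : Type*} {G : Type*} [Group G] (π : FreeMonoid X →* G) (L : Language X) :
    Set G :=
  (fun w : List X => π (FreeMonoid.ofList w)) '' L

/-- `S ⊆ G` is the evaluation of a regular language over some finite generating set of `G`. -/
def HasRegularConeEval {G : Type*} [Group G] (S : Set G) : Prop :=
  ∃ (X : Type) (_ : Fintype X) (π : FreeMonoid X →* G),
    Function.Surjective π ∧ ∃ L : Language X, L.IsRegular ∧ evalLang π L = S

/-- The word over `Q × X` obtained from a word over `X` by recording, beside each letter, the
state (evolving under `δ` from `q`) in which that letter is read. -/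
def traced {Q X : Type} (δ : Q → X → Q) : Q → List X → List (Q × X)
  | _, [] => []
  | q, x :: w => (q, x) :: traced δ (δ q x) w

open Classical in
/-- The automaton which checks that a word over `Q × X` has the form `traced δ q₀ w` with `w`
leading from `q₀` back to `q₀`, and at the same time runs `M` on `w`. The state `none` is the
sink reached when a recorded state is wrong. -/
noncomputable def traceDFA {Q X σ : Type} (δ : Q → X → Q) (q₀ : Q) (M : DFA X σ) :
    DFA (Q × X) (Option (Q × σ)) where
  step s a := s.bind fun p => if a.1 = p.1 then some (δ p.1 a.2, M.step p.2 a.2) else none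
  start := some (q₀, M.start)
  accept := {s | ∃ p ∈ M.accept, s = some (q₀, p)}

lemma traceDFA_evalFrom_none {Q X σ : Type} (δ : Q → X → Q) (q₀ : Q) (M : DFA X σ)
    (v : List (Q × X)) : (traceDFA δ q₀ M).evalFrom none v = none := by
  induction v with
  | nil => rfl
  | cons a v ih => rw [DFA.evalFrom_cons]; exact ih

lemma traceDFA_evalFrom {Q X σ : Type} (δ : Q → X → Q) (q₀ : Q) (M : DFA X σ)
    (v : List (Q × X)) (q q' : Q) (s s' : σ) :
    (traceDFA δ q₀ M).evalFrom (some (q, s)) v = some (q', s') ↔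
      ∃ w, traced δ q w = v ∧ w.foldl δ q = q' ∧ M.evalFrom s w = s' := by
  induction v generalizing q s with
  | nil =>
    constructor
    · intro h
      simp only [DFA.evalFrom_nil, Option.some.injEq, Prod.mk.injEq] at h
      exact ⟨[], rfl, h.1, h.2⟩
    · rintro ⟨w, hw, h1, h2⟩
      cases w with
      | nil => simp_all
      | cons x w => simp [traced] at hw
  | cons a v ih =>
    obtain ⟨r, x⟩ := a
    rw [DFA.evalFrom_cons]
    by_cases hr : r = q
    · subst hr
      have hs : (traceDFA δ q₀ M).step (some (r, s)) (r, x) = some (δ r x, M.step s x) := by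
        simp [traceDFA]
      rw [hs, ih]
      constructor
      · rintro ⟨w, hw, h1, h2⟩
        exact ⟨x :: w, by simp [traced, hw], h1, by simpa using h2⟩
      · rintro ⟨w, hw, h1, h2⟩
        cases w with
        | nil => simp [traced] at hw
        | cons y w =>
          simp only [traced, List.cons.injEq, Prod.mk.injEq, true_and] at hw
          obtain ⟨rfl, hw⟩ := hw
          exact ⟨w, hw, h1, by simpa using h2⟩
    · have hs : (traceDFA δ q₀ M).step (some (q, s)) (r, x) = none := by
        simp [traceDFA, hr]
      rw [hs, traceDFA_evalFrom_none]
      constructor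
      · intro h; cases h
      · rintro ⟨w, hw, -⟩
        cases w with
        | nil => simp [traced] at hw
        | cons y w =>
          simp only [traced, List.cons.injEq, Prod.mk.injEq] at hw
          exact absurd hw.1.1.symm hr

lemma isRegular_traced {Q X : Type} [Fintype Q] (δ : Q → X → Q) (q₀ : Q) (L : Language X)
    (hL : L.IsRegular) :
    Language.IsRegular
      ({v | ∃ w ∈ L, w.foldl δ q₀ = q₀ ∧ traced δ q₀ w = v} : Language (Q × X)) := by
  obtain ⟨σ, _, M, rfl⟩ := hL
  refine ⟨Option (Q × σ), inferInstance, traceDFA δ q₀ M, ?_⟩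
  ext v
  constructor
  · rintro ⟨p, hp, h⟩
    obtain ⟨w, hw, h1, h2⟩ := (traceDFA_evalFrom δ q₀ M v q₀ q₀ M.start p).1 h
    refine ⟨w, ?_, h1, hw⟩
    rw [DFA.mem_accepts, DFA.eval, h2]
    exact hp
  · rintro ⟨w, hw, h1, h2⟩
    exact ⟨_, hw, (traceDFA_evalFrom δ q₀ M v q₀ q₀ M.start _).2 ⟨w, h2, h1, rfl⟩⟩

/-- The telescoping product of the Schreier generators `γ (q, x)` along a word. -/
lemma coe_lift_traced {G : Type*} [Group G] {H : Subgroup G} {Q X : Type} (δ : Q → X → Q)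
    (t : Q → G) (π : FreeMonoid X →* G) (γ : Q × X → H)
    (hγ : ∀ q x, (γ (q, x) : G) = (t q)⁻¹ * π (FreeMonoid.of x) * t (δ q x))
    (w : List X) (q : Q) :
    (FreeMonoid.lift γ (FreeMonoid.ofList (traced δ q w)) : G) =
      (t q)⁻¹ * π (FreeMonoid.ofList w) * t (w.foldl δ q) := by
  induction w generalizing q with
  | nil => simp [traced]
  | cons x w ih =>
    rw [traced, FreeMonoid.ofList_cons, FreeMonoid.ofList_cons, map_mul, map_mul,
      Subgroup.coe_mul, ih, FreeMonoid.lift_eval_of, hγ, List.foldl_cons]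
    group

lemma HasRegularConeEval.subgroup {G : Type*} [Group G] {P : Set G}
    (hreg : HasRegularConeEval P) (H : Subgroup G) (hH : H.index ≠ 0) :
    HasRegularConeEval {h : H | (h : G) ∈ P} := by
  classical
  obtain ⟨X, _, π, hπ, L, hL, rfl⟩ := hreg
  have : H.FiniteIndex := ⟨hH⟩
  -- The cosets are indexed by `Fin n`, since the new alphabet has to live in `Type`.
  obtain ⟨n, ⟨e⟩⟩ := Finite.exists_equiv_fin (G ⧸ H)
  let q₀ : Fin n := e ((1 : G) : G ⧸ H)
  let δ : Fin n → X → Fin n := fun q x => e ((π (FreeMonoid.of x))⁻¹ • e.symm q)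
  let t : Fin n → G := fun q => if q = q₀ then 1 else (e.symm q).out
  have ht₀ : t q₀ = 1 := by simp [t]
  have ht : ∀ q, ((t q : G) : G ⧸ H) = e.symm q := by
    intro q
    by_cases h : q = q₀
    · subst h; simp [ht₀, q₀]
    · simp [t, h]
  have hmem : ∀ q x, (t q)⁻¹ * π (FreeMonoid.of x) * t (δ q x) ∈ H := by
    intro q x
    have h : ((t q : G) : G ⧸ H) = ((π (FreeMonoid.of x) * t (δ q x) : G) : G ⧸ H) := by
      rw [← smul_eq_mul, ← MulAction.Quotient.smul_coe, ht, ht]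
      simp [δ]
    rw [QuotientGroup.eq] at h
    simpa [mul_assoc] using h
  let γ : Fin n × X → H := fun a => ⟨_, hmem a.1 a.2⟩
  have hfold : ∀ (w : List X) q,
      e.symm (w.foldl δ q) = (π (FreeMonoid.ofList w))⁻¹ • e.symm q := by
    intro w
    induction w with
    | nil => intro q; simp
    | cons x w ih =>
      intro q
      rw [List.foldl_cons, ih, FreeMonoid.ofList_cons, map_mul, mul_inv_rev, mul_smul]
      simp [δ]
  have hclosed : ∀ w : List X, w.foldl δ q₀ = q₀ ↔ π (FreeMonoid.ofList w) ∈ H := by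
    intro w
    rw [← e.symm.injective.eq_iff, hfold]
    simp only [q₀, Equiv.symm_apply_apply]
    rw [MulAction.Quotient.smul_coe, QuotientGroup.eq]
    simp
  have hval : ∀ w : List X, w.foldl δ q₀ = q₀ →
      (FreeMonoid.lift γ (FreeMonoid.ofList (traced δ q₀ w)) : G) = π (FreeMonoid.ofList w) := by
    intro w hw
    rw [coe_lift_traced δ t π γ (fun _ _ => rfl), hw, ht₀]
    simp
  refine ⟨Fin n × X, inferInstance, FreeMonoid.lift γ, ?_, _, isRegular_traced δ q₀ L hL, ?_⟩
  · intro h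
    obtain ⟨w, hw⟩ := hπ (h : G)
    refine ⟨FreeMonoid.ofList (traced δ q₀ (FreeMonoid.toList w)), Subtype.ext ?_⟩
    rw [hval, FreeMonoid.ofList_toList, hw]
    rw [hclosed, FreeMonoid.ofList_toList, hw]
    exact h.2
  · ext h
    constructor
    · rintro ⟨_, ⟨w, hwL, hw, rfl⟩, rfl⟩
      exact ⟨w, hwL, (hval w hw).symm⟩
    · rintro ⟨w, hwL, hw⟩
      have hw' : π (FreeMonoid.ofList w) = h := hw
      have hc : w.foldl δ q₀ = q₀ := by rw [hclosed, hw']; exact h.2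
      exact ⟨_, ⟨w, hwL, hc, rfl⟩, Subtype.ext ((hval w hc).trans hw')⟩

/-- A regular positive cone on a finitely generated group restricts to a regular
positive cone on any finite index subgroup. -/
theorem stmt1 {G : Type*} [Group G] (P : Set G) (hP : IsPositiveCone P)
    (hreg : HasRegularConeEval P) (H : Subgroup G) (hH : H.index ≠ 0) :
    IsPositiveCone {h : H | (h : G) ∈ P} ∧
      HasRegularConeEval {h : H | (h : G) ∈ P} := by
  obtain ⟨hmul, htri, hinv, hone⟩ := hP
  refine ⟨⟨fun a ha b hb => hmul a ha b hb, fun g => ?_, fun g hg => hinv g hg, hone⟩,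
    hreg.subgroup H hH⟩
  rcases htri g with h | h | h
  · exact Or.inl h
  · exact Or.inr (Or.inl h)
  · exact Or.inr (Or.inr (Subtype.ext h))
end

section
/- Let G be a group, H ≤ G a subgroup, P_rel ⊆ G a positive cone relative to H, and P_H ⊆ H a positive cone of H. Then P = P_rel ∪ P_H is a positive cone of G. Moreover, if (X, π) is a finite generating set of G and there are regular languages L_rel, L_H ⊆ X* with π(L_rel) = P_rel and π(L_H) = P_H, then there is a regular language L ⊆ X* with π(L) = P. -/
theorem IsRelPositiveCone.mul_mem_of_mem_right {G : Type*} [Group G] {H : Subgroup G} {P : Set G}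
    (hP : IsRelPositiveCone H P) {a h : G} (ha : a ∈ P) (hh : h ∈ H) : a * h ∈ P := by
  obtain ⟨hmul, htot, -, hdisj⟩ := hP
  rcases htot (a * h) with hc | hc | hc
  · exact hc
  · have hmem := hmul _ hc _ ha
    rw [show (a * h)⁻¹ * a = h⁻¹ by group] at hmem
    exact absurd (H.inv_mem hh) (hdisj _ hmem)
  · exact absurd ((H.mul_mem_cancel_right hh).1 hc) (hdisj a ha)

theorem IsRelPositiveCone.mul_mem_of_mem_left {G : Type*} [Group G] {H : Subgroup G} {P : Set G}
    (hP : IsRelPositiveCone H P) {a h : G} (ha : a ∈ P) (hh : h ∈ H) : h * a ∈ P := by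
  obtain ⟨hmul, htot, -, hdisj⟩ := hP
  rcases htot (h * a) with hc | hc | hc
  · exact hc
  · have hmem := hmul _ ha _ hc
    rw [show a * (h * a)⁻¹ = h⁻¹ by group] at hmem
    exact absurd (H.inv_mem hh) (hdisj _ hmem)
  · exact absurd ((H.mul_mem_cancel_left hh).1 hc) (hdisj a ha)

/-- If `P_rel` is a positive cone relative to a subgroup `H` and `P_H` is a positive
cone of `H`, then `P_rel ∪ P_H` is a positive cone of `G`; moreover if both are
evaluations of regular languages over a finite generating set of `G`, so is the union. -/
theorem stmt2 {G : Type*} [Group G] (X : Type) [Fintype X] (π : FreeMonoid X →* G)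
    (hπ : Function.Surjective π) (H : Subgroup G) (Prel PH : Set G)
    (h1 : IsRelPositiveCone H Prel) (h2 : IsPositiveConeIn H PH) :
    IsPositiveCone (Prel ∪ PH) ∧
    ∀ (Lrel LH : Language X), Lrel.IsRegular → LH.IsRegular →
      evalLang π Lrel = Prel → evalLang π LH = PH →
      ∃ L : Language X, L.IsRegular ∧ evalLang π L = Prel ∪ PH := by
  have hr {a h : G} (ha : a ∈ Prel) (hh : h ∈ H) : a * h ∈ Prel := h1.mul_mem_of_mem_right ha hh
  have hl {a h : G} (ha : a ∈ Prel) (hh : h ∈ H) : h * a ∈ Prel := h1.mul_mem_of_mem_left ha hh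
  obtain ⟨hmul, htot, hinv, hdisj⟩ := h1
  obtain ⟨hsub, hmul', htot', hinv', hone⟩ := h2
  refine ⟨⟨?_, ?_, ?_, ?_⟩, ?_⟩
  · rintro a (ha | ha) b (hb | hb)
    · exact .inl (hmul a ha b hb)
    · exact .inl (hr ha (hsub hb))
    · exact .inl (hl hb (hsub ha))
    · exact .inr (hmul' a ha b hb)
  · intro g
    rcases htot g with h | h | h
    · exact .inl (.inl h)
    · exact .inr (.inl (.inl h))
    · rcases htot' g h with h | h | h
      · exact .inl (.inr h)
      · exact .inr (.inl (.inr h))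
      · exact .inr (.inr h)
  · rintro g (hg | hg) (hg' | hg')
    · exact hinv g hg hg'
    · exact hdisj g hg (H.inv_mem_iff.1 (hsub hg'))
    · exact hdisj _ hg' (H.inv_mem (hsub hg))
    · exact hinv' g hg hg'
  · rintro (h | h)
    · exact hdisj 1 h H.one_mem
    · exact hone h
  · rintro Lrel LH hLrel hLH rfl rfl
    exact ⟨Lrel + LH, hLrel.add hLH, Set.image_union _ Lrel LH⟩
end

section
/- Let N and Q be finitely generated groups and let 1 → N → G → Q → 1 be a short exact sequence of groups, with f : G → Q the surjection. If N admits a regular positive cone P_N (with respect to some finite generating set of N) and Q admits a regular positive cone P_Q (with respect to some finite generating set of Q), then f⁻¹(P_Q) ∪ P_N is a regular positive cone of G with respect to some finite generating set of G. In particular, the class of finitely generated groups admitting regular positive cones is closed under extensions. -/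
/-- Regular languages are closed under inverse images of letter-erasing, letter-to-letter
homomorphisms: the automaton stays put on the erased letters. -/
theorem isRegular_filterMap_preimage {A B : Type} (g : A → Option B) {L : Language B}
    (hL : L.IsRegular) : Language.IsRegular ({w | w.filterMap g ∈ L} : Set (List A)) := by
  obtain ⟨σ, _, M, rfl⟩ := hL
  let M' : DFA A σ := ⟨fun s a => (g a).elim s (M.step s), M.start, M.accept⟩
  have key : ∀ (w : List A) (s : σ), M'.evalFrom s w = M.evalFrom s (w.filterMap g) := by
    intro w
    induction w with
    | nil => intro s; rfl
    | cons a w ih =>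
      intro s
      rw [DFA.evalFrom_cons, ih]
      cases h : g a <;> simp [M', h]
  refine ⟨σ, inferInstance, M', ?_⟩
  ext w
  change M'.evalFrom M.start w ∈ M.accept ↔ M.evalFrom M.start (w.filterMap g) ∈ M.accept
  rw [key]

/-- A regular language stays regular over a larger alphabet. The automaton gains the dead state
`none`, which it enters on every new letter. -/
theorem isRegular_image_inl {A B : Type} {L : Language A} (hL : L.IsRegular) :
    Language.IsRegular (List.map (Sum.inl : A → A ⊕ B) '' L : Set (List (A ⊕ B))) := by
  obtain ⟨σ, _, M, rfl⟩ := hL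
  let M' : DFA (A ⊕ B) (Option σ) :=
    ⟨fun s c => Sum.elim (fun a => s.map (M.step · a)) (fun _ => none) c, some M.start,
      some '' M.accept⟩
  have dead : ∀ w : List (A ⊕ B), M'.evalFrom none w = none := by
    intro w
    induction w with
    | nil => rfl
    | cons c w ih =>
      rw [DFA.evalFrom_cons]
      cases c <;> exact ih
  have key : ∀ (w : List (A ⊕ B)) (s : σ), M'.evalFrom (some s) w ∈ some '' M.accept ↔
      ∃ u, M.evalFrom s u ∈ M.accept ∧ u.map Sum.inl = w := by
    intro w
    induction w with
    | nil => intro s; simp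
    | cons c w ih =>
      intro s
      rw [DFA.evalFrom_cons]
      cases c with
      | inl a =>
        refine (ih (M.step s a)).trans ⟨?_, ?_⟩
        · rintro ⟨u, hu, rfl⟩
          exact ⟨a :: u, hu, rfl⟩
        · rintro ⟨_ | ⟨b, u⟩, hu, h⟩
          · simp at h
          · simp only [List.map_cons, List.cons.injEq, Sum.inl.injEq] at h
            obtain ⟨rfl, h⟩ := h
            exact ⟨u, hu, h⟩
      | inr b =>
        change M'.evalFrom none w ∈ _ ↔ _
        rw [dead]
        simp only [Set.mem_image, reduceCtorEq, and_false, exists_false, false_iff]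
        rintro ⟨_ | ⟨b, u⟩, hu, h⟩ <;> simp at h
  refine ⟨Option σ, inferInstance, M', ?_⟩
  ext w
  exact key w M.start

/-- The lexicographic cone: positivity is decided in `Q`, and inside `ker f` by `PN`. -/
theorem isPositiveCone_lex {G Q : Type*} [Group G] [Group Q] (f : G →* Q)
    {PQ : Set Q} (hPQ : IsPositiveCone PQ) {PN : Set G} (hPN : IsPositiveConeIn f.ker PN) :
    IsPositiveCone (f ⁻¹' PQ ∪ PN) := by
  obtain ⟨qmul, qtri, qinv, qone⟩ := hPQ
  obtain ⟨nsub, nmul, ntri, ninv, n_one⟩ := hPN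
  have hk : ∀ {g}, g ∈ PN → f g = 1 := fun h => f.mem_ker.1 (nsub h)
  refine ⟨?_, ?_, ?_, ?_⟩
  · rintro a (ha | ha) b (hb | hb)
    · left; simpa using qmul _ ha _ hb
    · left; simpa [hk hb] using ha
    · left; simpa [hk ha] using hb
    · right; exact nmul a ha b hb
  · intro g
    rcases qtri (f g) with h | h | h
    · exact Or.inl (Or.inl h)
    · right; left; left; simpa using h
    · rcases ntri g (f.mem_ker.2 h) with h | h | h
      · exact Or.inl (Or.inr h)
      · exact Or.inr (Or.inl (Or.inr h))
      · exact Or.inr (Or.inr h)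
  · rintro g (hg | hg) (hi | hi)
    · exact qinv _ hg (by simpa using hi)
    · have h1 : f g = 1 := by simpa using hk hi
      exact qone (h1 ▸ hg)
    · have h1 : f g⁻¹ = 1 := by simpa using hk hg
      exact qone (h1 ▸ hi)
    · exact ninv g hg hi
  · rintro (h | h)
    · exact qone (by simpa using h)
    · exact n_one h

/-- Regularity of positive cones is closed under group extensions: if
`1 → N → G → Q → 1` is exact, `P_Q` is a regular positive cone of `Q` and `P_N` a
regular positive cone of `N = ker f`, then the lexicographic cone `f⁻¹(P_Q) ∪ P_N`
is a regular positive cone of `G`. -/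
theorem stmt4 {G Q : Type*} [Group G] [Group Q] (f : G →* Q)
    (hf : Function.Surjective f)
    (PQ : Set Q) (hPQ : IsPositiveCone PQ) (hPQreg : HasRegularConeEval PQ)
    (PN : Set G) (hPN : IsPositiveConeIn f.ker PN)
    (hPNreg : HasRegularConeEval {x : f.ker | (x : G) ∈ PN}) :
    IsPositiveCone (f ⁻¹' PQ ∪ PN) ∧ HasRegularConeEval (f ⁻¹' PQ ∪ PN) := by
  refine ⟨isPositiveCone_lex f hPQ hPN, ?_⟩
  obtain ⟨X, _, πN, hπN, LN, hLN, hLNeq⟩ := hPNreg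
  obtain ⟨Y, _, πQ, hπQ, LQ, hLQ, hLQeq⟩ := hPQreg
  choose lift hlift using hf
  let π : FreeMonoid (X ⊕ Y) →* G := FreeMonoid.lift
    (Sum.elim (fun x => (πN (FreeMonoid.of x) : G)) (fun y => lift (πQ (FreeMonoid.of y))))
  have hinl : ∀ u : List X, π (FreeMonoid.ofList (u.map Sum.inl)) =
      (πN (FreeMonoid.ofList u) : G) := by
    intro u
    induction u with
    | nil => simp
    | cons x u ih =>
      simp only [List.map_cons, FreeMonoid.ofList_cons, map_mul, ih, Subgroup.coe_mul]
      simp [π]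
  have hfπ : ∀ w : List (X ⊕ Y), f (π (FreeMonoid.ofList w)) =
      πQ (FreeMonoid.ofList (w.filterMap Sum.getRight?)) := by
    intro w
    induction w with
    | nil => simp
    | cons c w ih =>
      rw [FreeMonoid.ofList_cons, map_mul, map_mul, ih]
      cases c with
      | inl x =>
        have hx : f (π (FreeMonoid.of (Sum.inl x))) = 1 :=
          f.mem_ker.1 (by simp [π])
        simp [hx, List.filterMap_cons]
      | inr y => simp [π, hlift, FreeMonoid.ofList_cons]
  have hsub : ∀ (v : List Y) (u : List X),
      (v.map Sum.inr ++ u.map Sum.inl : List (X ⊕ Y)).filterMap Sum.getRight? = v := by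
    intro v u
    simp [List.filterMap_map, Function.comp_def]
  -- The lift of a word for `f g` differs from `g` by an element of `f.ker`, that is, by a word
  -- over `X`.
  have hreach : ∀ (g : G) (v : List Y), πQ (FreeMonoid.ofList v) = f g →
      ∃ u : List X, π (FreeMonoid.ofList (v.map Sum.inr ++ u.map Sum.inl)) = g := by
    intro g v hv
    have hker : (π (FreeMonoid.ofList (v.map Sum.inr)))⁻¹ * g ∈ f.ker := by
      rw [f.mem_ker, map_mul, map_inv, hfπ, ← hv]
      simp [List.filterMap_map, Function.comp_def]
    obtain ⟨u, hu⟩ := hπN ⟨_, hker⟩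
    refine ⟨FreeMonoid.toList u, ?_⟩
    rw [FreeMonoid.ofList_append, map_mul, hinl, FreeMonoid.ofList_toList, hu]
    simp
  refine ⟨X ⊕ Y, inferInstance, π, ?_, _,
    (isRegular_filterMap_preimage Sum.getRight? hLQ).add (isRegular_image_inl hLN), ?_⟩
  · intro g
    obtain ⟨v, hv⟩ := hπQ (f g)
    obtain ⟨u, hu⟩ := hreach g (FreeMonoid.toList v) hv
    exact ⟨_, hu⟩
  · ext g
    constructor
    · rintro ⟨w, hw | ⟨u, hu, rfl⟩, rfl⟩
      · left
        change f (π (FreeMonoid.ofList w)) ∈ PQ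
        rw [hfπ, ← hLQeq]
        exact ⟨_, hw, rfl⟩
      · right
        have hmem : πN (FreeMonoid.ofList u) ∈ {x : f.ker | (x : G) ∈ PN} :=
          hLNeq ▸ ⟨u, hu, rfl⟩
        change π (FreeMonoid.ofList (u.map Sum.inl)) ∈ PN
        rw [hinl]
        exact hmem
    · rintro (hg | hg)
      · obtain ⟨v, hv, hvg⟩ : f g ∈ evalLang πQ LQ := hLQeq ▸ hg
        obtain ⟨u, hu⟩ := hreach g v hvg
        refine ⟨_, Or.inl ?_, hu⟩
        change List.filterMap _ _ ∈ LQ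
        rwa [hsub]
      · have hmem : (⟨g, hPN.1 hg⟩ : f.ker) ∈ evalLang πN LN := hLNeq ▸ hg
        obtain ⟨u, hu, hug⟩ := hmem
        refine ⟨_, Or.inr ⟨u, hu, rfl⟩, ?_⟩
        exact (hinl u).trans (congrArg Subtype.val hug)
end

section
/- Every poly-ℤ group admits a regular positive cone with respect to some finite generating set. Here a group G is poly-ℤ if it admits a subnormal series G = G₀ ⊵ G₁ ⊵ … ⊵ Gₙ = {1} in which each quotient G_i/G_{i+1} is infinite cyclic. -/
/-- `G` is poly-ℤ: it admits a subnormal series `G = G₀ ⊵ G₁ ⊵ … ⊵ Gₙ = {1}` with each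
quotient `G_i/G_{i+1}` infinite cyclic (expressed via a surjection onto `ℤ` with kernel
`G_{i+1}`). -/
def IsPolyZ (G : Type*) [Group G] : Prop :=
  ∃ (n : ℕ) (s : ℕ → Subgroup G), s 0 = ⊤ ∧ s n = ⊥ ∧
    ∀ i < n, s (i + 1) ≤ s i ∧
      ∃ φ : ↥(s i) →* Multiplicative ℤ, Function.Surjective φ ∧
        φ.ker = (s (i + 1)).subgroupOf (s i)

/-! ### Series with infinite cyclic quotients -/

/-- A subnormal series with infinite cyclic quotients, with chosen generators. The quotient map
`s i → ℤ` is encoded as a function `ψ i` on all of `G` that is constrained only on `s i`. -/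
structure PolyZSeries (G : Type*) [Group G] where
  n : ℕ
  s : ℕ → Subgroup G
  ψ : Fin n → G → ℤ
  t : Fin n → G
  s_zero : s 0 = ⊤
  s_last : s n = ⊥
  s_le : ∀ i < n, s (i + 1) ≤ s i
  ψ_mul : ∀ i : Fin n, ∀ g ∈ s i, ∀ h ∈ s i, ψ i (g * h) = ψ i g + ψ i h
  ψ_eq_zero : ∀ i : Fin n, ∀ g ∈ s i, ψ i g = 0 ↔ g ∈ s (i + 1)
  t_mem : ∀ i : Fin n, t i ∈ s i
  ψ_t : ∀ i : Fin n, ψ i (t i) = 1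

theorem IsPolyZ.nonempty_series {G : Type*} [Group G] (hG : IsPolyZ G) :
    Nonempty (PolyZSeries G) := by
  classical
  obtain ⟨n, s, h0, hn, hs⟩ := hG
  choose hle φ hsurj hker using hs
  have ht : ∀ i : Fin n, ∃ x : s i, φ i i.2 x = Multiplicative.ofAdd 1 := fun i => hsurj i i.2 _
  choose t ht using ht
  refine ⟨⟨n, s, fun i g => if h : g ∈ s i then (φ i i.2 ⟨g, h⟩).toAdd else 0, fun i => t i,
    h0, hn, hle, ?_, ?_, fun i => (t i).2, ?_⟩⟩
  · intro i g hg h hh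
    have : (⟨g * h, mul_mem hg hh⟩ : s i) = ⟨g, hg⟩ * ⟨h, hh⟩ := rfl
    simp only [dif_pos hg, dif_pos hh, dif_pos (mul_mem hg hh)]
    rw [this, map_mul, toAdd_mul]
  · intro i g hg
    have h1 : (⟨g, hg⟩ : s i) ∈ (φ i i.2).ker ↔ g ∈ s (i + 1) := by
      rw [hker i i.2, Subgroup.mem_subgroupOf]
    simp only [dif_pos hg, ← h1, MonoidHom.mem_ker, toAdd_eq_zero]
  · intro i
    simp [ht]

namespace PolyZSeries

variable {G : Type*} [Group G] (S : PolyZSeries G)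

theorem s_anti {i j : ℕ} (hij : i ≤ j) (hj : j ≤ S.n) : S.s j ≤ S.s i := by
  induction j, hij using Nat.le_induction with
  | base => exact le_rfl
  | succ j hij ih => exact (S.s_le j (by omega)).trans (ih (by omega))

theorem ψ_one (i : Fin S.n) : S.ψ i 1 = 0 :=
  (S.ψ_eq_zero i 1 (one_mem _)).2 (one_mem _)

theorem ψ_inv (i : Fin S.n) {g : G} (hg : g ∈ S.s i) : S.ψ i g⁻¹ = -S.ψ i g := by
  have := S.ψ_mul i g hg g⁻¹ (inv_mem hg)
  rw [mul_inv_cancel, ψ_one] at this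
  omega

theorem ψ_pow (i : Fin S.n) {g : G} (hg : g ∈ S.s i) (m : ℕ) :
    S.ψ i (g ^ m) = m * S.ψ i g := by
  induction m with
  | zero => simp [ψ_one]
  | succ m ih => rw [pow_succ, S.ψ_mul i _ (pow_mem hg m) _ hg, ih]; push_cast; ring

theorem ψ_of_lt {i : Fin S.n} {j : ℕ} (hij : i.1 < j) (hj : j ≤ S.n) {g : G} (hg : g ∈ S.s j) :
    S.ψ i g = 0 :=
  (S.ψ_eq_zero i g (S.s_anti hij.le hj hg)).2 (S.s_anti hij hj hg)

/-! ### The lexicographic positive cone -/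

/-- The elements whose image in the quotient at their own level is positive. -/
def cone : Set G := {g | ∃ i : Fin S.n, g ∈ S.s i ∧ 0 < S.ψ i g}

theorem cone_or_inv {g : G} (hg : g ≠ 1) : g ∈ S.cone ∨ g⁻¹ ∈ S.cone := by
  by_contra! hc
  have key : ∀ i ≤ S.n, g ∈ S.s i := by
    intro i
    induction i with
    | zero => simp [S.s_zero]
    | succ i ih =>
      intro hi
      have hm := ih (by omega)
      refine (S.ψ_eq_zero ⟨i, hi⟩ g hm).1 ?_
      have h1 : ¬ 0 < S.ψ ⟨i, hi⟩ g := fun h => hc.1 ⟨⟨i, hi⟩, hm, h⟩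
      have h2 : ¬ 0 < S.ψ ⟨i, hi⟩ g⁻¹ := fun h => hc.2 ⟨⟨i, hi⟩, inv_mem hm, h⟩
      rw [S.ψ_inv _ hm] at h2
      omega
  have := key S.n le_rfl
  rw [S.s_last, Subgroup.mem_bot] at this
  exact hg this

theorem mul_mem_cone {a b : G} (ha : a ∈ S.cone) (hb : b ∈ S.cone) : a * b ∈ S.cone := by
  obtain ⟨i, hi, hi'⟩ := ha
  obtain ⟨j, hj, hj'⟩ := hb
  rcases lt_trichotomy i j with h | h | h
  · have hb := S.s_anti (Fin.le_def.1 h.le) j.2.le hj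
    refine ⟨i, mul_mem hi hb, ?_⟩
    rwa [S.ψ_mul i a hi b hb, S.ψ_of_lt h j.2.le hj, add_zero]
  · subst h
    refine ⟨i, mul_mem hi hj, ?_⟩
    rw [S.ψ_mul i a hi b hj]
    omega
  · have ha := S.s_anti (Fin.le_def.1 h.le) i.2.le hi
    refine ⟨j, mul_mem ha hj, ?_⟩
    rwa [S.ψ_mul j a ha b hj, S.ψ_of_lt h i.2.le hi, zero_add]

theorem one_notMem_cone : (1 : G) ∉ S.cone := by
  rintro ⟨i, -, h⟩
  simp [ψ_one] at h

theorem isPositiveCone_cone : IsPositiveCone S.cone := by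
  refine ⟨fun a ha b hb => S.mul_mem_cone ha hb, fun g => ?_, fun g hg hg' => ?_,
    S.one_notMem_cone⟩
  · by_cases h : g = 1
    · exact Or.inr (Or.inr h)
    · rcases S.cone_or_inv h with h | h
      · exact Or.inl h
      · exact Or.inr (Or.inl h)
  · exact S.one_notMem_cone (by simpa using S.mul_mem_cone hg hg')

/-! ### Words in the generators -/

/-- The letter `(i, true)` stands for `t i`, and `(i, false)` for its inverse. -/
def letter (x : Fin S.n × Bool) : G := if x.2 then S.t x.1 else (S.t x.1)⁻¹

theorem letter_mem (x : Fin S.n × Bool) : S.letter x ∈ S.s x.1 := by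
  unfold letter
  split
  · exact S.t_mem _
  · exact inv_mem (S.t_mem _)

/-- The evaluation of words in the letters. -/
def eval : FreeMonoid (Fin S.n × Bool) →* G := FreeMonoid.lift S.letter

theorem eval_ofList (w : List (Fin S.n × Bool)) :
    S.eval (FreeMonoid.ofList w) = (w.map S.letter).prod := by
  simp [eval, FreeMonoid.lift_apply]

theorem exists_word {i : ℕ} (hi : i ≤ S.n) {g : G} (hg : g ∈ S.s i) :
    ∃ w : List (Fin S.n × Bool), (∀ x ∈ w, i ≤ x.1.1) ∧ (w.map S.letter).prod = g := by
  induction hi using Nat.decreasingInduction generalizing g with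
  | self =>
    rw [S.s_last, Subgroup.mem_bot] at hg
    exact ⟨[], by simp, by simp [hg]⟩
  | of_succ i hi ih =>
    -- A power of one letter of index `i` has the same image under `ψ` as `g`.
    obtain ⟨m, b, hmb⟩ : ∃ (m : ℕ) (b : Bool),
        S.ψ ⟨i, hi⟩ (S.letter (⟨i, hi⟩, b) ^ m) = S.ψ ⟨i, hi⟩ g := by
      obtain ⟨m, hm | hm⟩ := Int.eq_nat_or_neg (S.ψ ⟨i, hi⟩ g)
      · refine ⟨m, true, ?_⟩
        simp [hm, letter, S.ψ_pow _ (S.t_mem ⟨i, hi⟩), S.ψ_t]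
      · refine ⟨m, false, ?_⟩
        simp only [letter, Bool.false_eq_true, if_false]
        rw [S.ψ_pow _ (inv_mem (S.t_mem ⟨i, hi⟩)), S.ψ_inv _ (S.t_mem ⟨i, hi⟩), S.ψ_t, hm]
        ring
    set u := S.letter (⟨i, hi⟩, b) ^ m with hu
    have hum : u ∈ S.s i := pow_mem (S.letter_mem (⟨i, hi⟩, b)) m
    have hk : u⁻¹ * g ∈ S.s (i + 1) := by
      refine (S.ψ_eq_zero ⟨i, hi⟩ _ (mul_mem (inv_mem hum) hg)).1 ?_
      rw [S.ψ_mul ⟨i, hi⟩ _ (inv_mem hum) _ hg, S.ψ_inv _ hum, hmb]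
      ring
    obtain ⟨w, hw, hwg⟩ := ih hk
    refine ⟨List.replicate m (⟨i, hi⟩, b) ++ w, ?_, ?_⟩
    · intro x hx
      rcases List.mem_append.1 hx with h | h
      · rw [List.eq_of_mem_replicate h]
      · have := hw x h
        omega
    · simp [hwg, ← hu]

theorem eval_surjective : Function.Surjective S.eval := by
  intro g
  obtain ⟨w, -, hw⟩ := S.exists_word (Nat.zero_le _) (g := g) (by simp [S.s_zero])
  exact ⟨FreeMonoid.ofList w, by rw [eval_ofList, hw]⟩

/-! ### Regularity of the cone -/

/-- The automaton whose state after reading a nonempty word is the minimal index `i` of its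
letters, together with the truth value of "every letter of index `i` is positive". -/
def aut : DFA (Fin S.n × Bool) (Option (Fin S.n × Bool)) where
  step
    | none, x => some x
    | some (i, b), (j, c) =>
      if j < i then some (j, c) else if j = i then some (i, b && c) else some (i, b)
  start := none
  accept := {q | ∃ i, q = some (i, true)}

theorem aut_spec (w : List (Fin S.n × Bool)) (i : Fin S.n) (b : Bool)
    (h : S.aut.eval w = some (i, b)) :
    (w.map S.letter).prod ∈ S.s i ∧ (b = true → 0 < S.ψ i (w.map S.letter).prod) := by
  have hpos : ∀ j, 0 < S.ψ j (S.letter (j, true)) := fun j => by simp [letter, S.ψ_t]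
  induction w using List.reverseRecOn generalizing i b with
  | nil => simp [DFA.eval, DFA.evalFrom, aut] at h
  | append_singleton w x ih =>
    obtain ⟨j, c⟩ := x
    have hx : S.letter (j, c) ∈ S.s j := S.letter_mem (j, c)
    rw [DFA.eval_append_singleton] at h
    simp only [List.map_append, List.map_cons, List.map_nil, List.prod_append, List.prod_cons,
      List.prod_nil, mul_one]
    rcases hq : S.aut.eval w with _ | ⟨k, d⟩
    · have hw : w = [] := by
        rcases List.eq_nil_or_concat w with hw | ⟨v, y, rfl⟩
        · exact hw
        · exfalso
          rw [List.concat_eq_append, DFA.eval_append_singleton] at hq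
          rcases hv : S.aut.eval v with _ | ⟨k, d⟩ <;> rw [hv] at hq <;>
            simp only [aut] at hq <;> grind
      rw [hq] at h
      simp only [aut, Option.some.injEq, Prod.mk.injEq] at h
      obtain ⟨rfl, rfl⟩ := h
      subst hw
      refine ⟨by simpa using hx, ?_⟩
      rintro rfl
      simpa using hpos j
    · obtain ⟨ih1, ih2⟩ := ih k d hq
      rw [hq] at h
      simp only [aut] at h
      split_ifs at h with h1 h2
      · simp only [Option.some.injEq, Prod.mk.injEq] at h
        obtain ⟨rfl, rfl⟩ := h
        have hw := S.s_anti (Fin.le_def.1 h1.le) k.2.le ih1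
        refine ⟨mul_mem hw hx, ?_⟩
        rintro rfl
        rw [S.ψ_mul j _ hw _ hx, S.ψ_of_lt h1 k.2.le ih1, zero_add]
        exact hpos j
      · simp only [Option.some.injEq, Prod.mk.injEq] at h
        obtain ⟨rfl, rfl⟩ := h
        subst h2
        refine ⟨mul_mem ih1 hx, ?_⟩
        intro hdc
        obtain ⟨rfl, rfl⟩ : d = true ∧ c = true := by simpa using hdc
        rw [S.ψ_mul j _ ih1 _ hx]
        exact add_pos (ih2 rfl) (hpos j)
      · simp only [Option.some.injEq, Prod.mk.injEq] at h
        obtain ⟨rfl, rfl⟩ := h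
        have hkj : k < j := lt_of_le_of_ne (not_lt.1 h1) (Ne.symm h2)
        have hx' := S.s_anti (Fin.le_def.1 hkj.le) j.2.le hx
        refine ⟨mul_mem ih1 hx', ?_⟩
        intro hd
        rw [S.ψ_mul k _ ih1 _ hx', S.ψ_of_lt hkj j.2.le hx, add_zero]
        exact ih2 hd

theorem aut_evalFrom (i : Fin S.n) (w : List (Fin S.n × Bool))
    (hw : ∀ x ∈ w, x = (i, true) ∨ i < x.1) :
    S.aut.evalFrom (some (i, true)) w = some (i, true) := by
  induction w with
  | nil => rfl
  | cons x w ih =>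
    have hstep : S.aut.step (some (i, true)) x = some (i, true) := by
      rcases hw x (by simp) with rfl | h
      · simp [aut]
      · obtain ⟨j, c⟩ := x
        have h1 : ¬ j < i := not_lt.2 (le_of_lt h)
        have h2 : j ≠ i := ne_of_gt h
        simp [aut, h1, h2]
    rw [DFA.evalFrom_cons, hstep]
    exact ih fun y hy => hw y (by simp [hy])

theorem evalLang_aut : evalLang S.eval S.aut.accepts = S.cone := by
  ext g
  constructor
  · rintro ⟨w, ⟨i, hi⟩, rfl⟩
    obtain ⟨h1, h2⟩ := S.aut_spec w i true hi
    refine ⟨i, ?_⟩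
    simp only [eval_ofList]
    exact ⟨h1, h2 rfl⟩
  · rintro ⟨i, hg, hpos⟩
    obtain ⟨m, hm⟩ : ∃ m : ℕ, S.ψ i g = ((m + 1 : ℕ) : ℤ) :=
      ⟨(S.ψ i g).toNat - 1, by omega⟩
    have hu : S.t i ^ (m + 1) ∈ S.s i := pow_mem (S.t_mem i) _
    have hk : (S.t i ^ (m + 1))⁻¹ * g ∈ S.s (i + 1) := by
      refine (S.ψ_eq_zero i _ (mul_mem (inv_mem hu) hg)).1 ?_
      rw [S.ψ_mul i _ (inv_mem hu) _ hg, S.ψ_inv _ hu, S.ψ_pow _ (S.t_mem i), S.ψ_t, hm]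
      ring
    obtain ⟨w, hw, hwg⟩ := S.exists_word i.2 hk
    refine ⟨(i, true) :: (List.replicate m (i, true) ++ w), ⟨i, ?_⟩, ?_⟩
    · refine S.aut_evalFrom i _ fun x hx => ?_
      rcases List.mem_append.1 hx with h | h
      · exact Or.inl (List.eq_of_mem_replicate h)
      · exact Or.inr (hw x h)
    · simp only [eval_ofList, List.map_cons, List.map_append, List.map_replicate, List.prod_cons,
        List.prod_append, List.prod_replicate, hwg]
      simp only [letter, if_true, pow_succ']
      group

end PolyZSeries

/-- Every poly-ℤ group admits a regular positive cone with respect to some finite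
generating set. -/
theorem stmt5 {G : Type*} [Group G] (hG : IsPolyZ G) :
    ∃ P : Set G, IsPositiveCone P ∧ HasRegularConeEval P := by
  obtain ⟨S⟩ := hG.nonempty_series
  exact ⟨S.cone, S.isPositiveCone_cone, Fin S.n × Bool, inferInstance, S.eval,
    S.eval_surjective, S.aut.accepts, ⟨_, inferInstance, S.aut, rfl⟩, S.evalLang_aut⟩
end

section
/- Every left-orderable virtually polycyclic group is poly-ℤ, i.e. admits a subnormal series G = G₀ ⊵ G₁ ⊵ … ⊵ Gₙ = {1} with each quotient G_i/G_{i+1} infinite cyclic. In particular, every left-orderable virtually polycyclic group admits a regular positive cone. -/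
/-- `G` is polycyclic: it admits a subnormal series with all quotients cyclic. -/
def IsPolycyclic (G : Type*) [Group G] : Prop :=
  ∃ (n : ℕ) (s : ℕ → Subgroup G), s 0 = ⊤ ∧ s n = ⊥ ∧
    ∀ i < n, s (i + 1) ≤ s i ∧ ((s (i + 1)).subgroupOf (s i)).Normal ∧
      ∃ x ∈ s i, ∀ g ∈ s i, ∃ k : ℤ, (x ^ k)⁻¹ * g ∈ s (i + 1)

namespace LOPolyZ

/-! ### Homomorphisms from almost additive functions -/

open scoped commutatorElement

lemma eq_zero_of_forall_nat_mul_le {t C : ℝ} (h : ∀ n : ℕ, (n : ℝ) * |t| ≤ C) : t = 0 := by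
  by_contra ht
  have ht' : 0 < |t| := abs_pos.mpr ht
  obtain ⟨n, hn⟩ := exists_nat_gt (C / |t|)
  rw [div_lt_iff₀ ht'] at hn
  exact absurd (h n) (not_le.mpr hn)

lemma nat_mul_abs (n : ℕ) (t : ℝ) : (n : ℝ) * |t| = |n * t| := by
  rw [abs_mul, Nat.abs_cast]

/-- Homogenization: an integer valued function `f` on a subgroup `A` that is additive up to an error
in `[0, 1]`, and that cannot tell `(a * b) ^ n` from `a ^ n * b ^ n`, is within bounded distance of
a real valued homomorphism `τ`. Here `τ a` is the limit of `f (a ^ n) / n`. -/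
lemma exists_translation {G : Type*} [Group G] (A : Subgroup G) (f : G → ℤ)
    (h1 : ∀ a ∈ A, ∀ b ∈ A, f a + f b ≤ f (a * b) ∧ f (a * b) ≤ f a + f b + 1)
    (h2 : ∀ a ∈ A, ∀ b ∈ A, ∀ n : ℕ, f ((a * b) ^ n) = f (a ^ n * b ^ n)) :
    ∃ τ : G → ℝ, (∀ a ∈ A, ∀ b ∈ A, τ (a * b) = τ a + τ b) ∧
      ∀ a ∈ A, ∀ n : ℕ, |(f (a ^ n) : ℝ) - n * τ a| ≤ 1 := by
  have h10 := h1 1 A.one_mem 1 A.one_mem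
  rw [mul_one] at h10
  have hpow : ∀ a ∈ A, ∀ n : ℕ, (n : ℤ) * f a ≤ f (a ^ n) + 1 := by
    intro a ha n
    induction n with
    | zero => simp; omega
    | succ n ih =>
      have := (h1 (a ^ n) (A.pow_mem ha n) a ha).1
      rw [← pow_succ] at this
      push_cast
      linarith
  have key : ∀ a ∈ A, ∃ t : ℝ, ∀ n : ℕ, |(f (a ^ n) : ℝ) - n * t| ≤ 1 := by
    intro a ha
    have hsub : Subadditive (fun n : ℕ => (f (a ^ n) : ℝ) + 1) := by
      intro m n
      have := (h1 (a ^ m) (A.pow_mem ha m) (a ^ n) (A.pow_mem ha n)).2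
      rw [← pow_add] at this
      have h' : (f (a ^ (m + n)) : ℝ) ≤ f (a ^ m) + f (a ^ n) + 1 := by exact_mod_cast this
      simp only
      linarith
    have hbdd : BddBelow (Set.range fun n : ℕ => ((f (a ^ n) : ℝ) + 1) / n) := by
      refine ⟨min (f a : ℝ) 0, ?_⟩
      rintro _ ⟨n, rfl⟩
      rcases Nat.eq_zero_or_pos n with rfl | hn
      · simp
      · refine (min_le_left _ _).trans ?_
        have hn' : (0 : ℝ) < n := by exact_mod_cast hn
        simp only
        rw [le_div_iff₀ hn']
        have := hpow a ha n
        rw [mul_comm] at this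
        exact_mod_cast this
    refine ⟨hsub.lim, fun n => ?_⟩
    rcases Nat.eq_zero_or_pos n with rfl | hn
    · have e1 : (f 1 : ℝ) ≤ 0 := by exact_mod_cast (by omega : f 1 ≤ 0)
      have e2 : (-1 : ℝ) ≤ f 1 := by exact_mod_cast (by omega : -1 ≤ f 1)
      simp only [pow_zero, Nat.cast_zero, zero_mul, sub_zero, abs_le]
      constructor <;> linarith
    · have hn' : (0 : ℝ) < n := by exact_mod_cast hn
      have hle := hsub.lim_le_div hbdd hn.ne'
      rw [le_div_iff₀ hn'] at hle
      have hge : (f (a ^ n) : ℝ) / n ≤ hsub.lim := by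
        have ht := (hsub.tendsto_lim hbdd).comp
          (Filter.tendsto_id.const_mul_atTop' hn : Filter.Tendsto (fun m : ℕ => n * m) _ _)
        refine ge_of_tendsto ht ?_
        filter_upwards [Filter.eventually_gt_atTop 0] with m hm
        have hm' : (0 : ℝ) < m := by exact_mod_cast hm
        have := hpow (a ^ n) (A.pow_mem ha n) m
        rw [← pow_mul] at this
        have h' : (m : ℝ) * f (a ^ n) ≤ f (a ^ (n * m)) + 1 := by exact_mod_cast this
        simp only [Function.comp]
        push_cast
        rw [div_le_div_iff₀ hn' (by positivity)]
        nlinarith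
      rw [div_le_iff₀ hn'] at hge
      rw [abs_le]
      constructor <;> linarith
  choose! τ hτ using key
  -- `n * τ (a * b)` and `n * τ a + n * τ b` stay within a distance independent of `n`
  refine ⟨τ, fun a ha b hb => ?_, hτ⟩
  rw [← sub_eq_zero]
  refine eq_zero_of_forall_nat_mul_le (C := 4) fun n => ?_
  have q := h1 (a ^ n) (A.pow_mem ha n) (b ^ n) (A.pow_mem hb n)
  rw [← h2 a ha b hb] at q
  have q1 : (f (a ^ n) : ℝ) + f (b ^ n) ≤ f ((a * b) ^ n) := by exact_mod_cast q.1
  have q2 : (f ((a * b) ^ n) : ℝ) ≤ f (a ^ n) + f (b ^ n) + 1 := by exact_mod_cast q.2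
  have ea := abs_le.mp (hτ a ha n)
  have eb := abs_le.mp (hτ b hb n)
  have eab := abs_le.mp (hτ _ (A.mul_mem ha hb) n)
  rw [nat_mul_abs, abs_le, mul_sub, mul_add]
  constructor <;> linarith [ea.1, ea.2, eb.1, eb.2, eab.1, eab.2]

/-- If `f` is almost additive on all of `G`, it is bounded on commutators. A conjugation invariant
homomorphism `τ` on `⁅M, M⁆` close to `f` is linear in `k` along `⁅g ^ k, h⁆`, hence zero. -/
lemma vanish_commutator {G : Type*} [Group G] (M : Subgroup G) [hn : (⁅M, M⁆ : Subgroup G).Normal]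
    (f : G → ℤ) (τ : G → ℝ)
    (hf : ∀ g h, f g + f h ≤ f (g * h) ∧ f (g * h) ≤ f g + f h + 1)
    (hadd : ∀ a ∈ ⁅M, M⁆, ∀ b ∈ ⁅M, M⁆, τ (a * b) = τ a + τ b)
    (hτ : ∀ a ∈ ⁅M, M⁆, |(f a : ℝ) - τ a| ≤ 1)
    (hinv : ∀ g, ∀ a ∈ ⁅M, M⁆, τ (g * a * g⁻¹) = τ a) :
    ∀ a ∈ ⁅M, M⁆, τ a = 0 := by
  have h1 : τ 1 = 0 := by
    have := hadd 1 (one_mem _) 1 (one_mem _)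
    rw [mul_one] at this
    linarith
  have hf1 := hf 1 1
  rw [mul_one] at hf1
  have hbd : ∀ g h : G, |(f ⁅g, h⁆ : ℝ)| ≤ 5 := by
    intro g h
    have a1 := hf g g⁻¹
    have a2 := hf h h⁻¹
    have a3 := hf g h
    have a4 := hf (g * h) g⁻¹
    have a5 := hf (g * h * g⁻¹) h⁻¹
    rw [mul_inv_cancel] at a1 a2
    rw [commutatorElement_def]
    have : |f (g * h * g⁻¹ * h⁻¹)| ≤ 5 := by
      rw [abs_le]; omega
    exact_mod_cast this
  have hc : ∀ g ∈ M, ∀ h ∈ M, τ ⁅g, h⁆ = 0 := by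
    intro g hg h hh
    have hmem : ∀ k : ℕ, ⁅g ^ k, h⁆ ∈ ⁅M, M⁆ := fun k =>
      Subgroup.commutator_mem_commutator (M.pow_mem hg k) hh
    have hk : ∀ k : ℕ, τ ⁅g ^ k, h⁆ = k * τ ⁅g, h⁆ := by
      intro k
      induction k with
      | zero => simp [h1]
      | succ k ih =>
        have e : ⁅g ^ (k + 1), h⁆ = (g * ⁅g ^ k, h⁆ * g⁻¹) * ⁅g, h⁆ := by
          simp only [commutatorElement_def]; group
        rw [e, hadd _ (hn.conj_mem _ (hmem k) g) _ (by simpa using hmem 1), hinv _ _ (hmem k), ih]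
        push_cast; ring
    refine eq_zero_of_forall_nat_mul_le (C := 6) fun n => ?_
    have e1 := abs_le.mp (hτ _ (hmem n))
    have e2 := abs_le.mp (hbd (g ^ n) h)
    rw [hk] at e1
    rw [nat_mul_abs, abs_le]
    constructor <;> linarith [e1.1, e1.2, e2.1, e2.2]
  let K : Subgroup G :=
    { carrier := {a | a ∈ ⁅M, M⁆ ∧ τ a = 0}
      one_mem' := ⟨one_mem _, h1⟩
      mul_mem' := fun {a b} ha hb => ⟨mul_mem ha.1 hb.1, by
        rw [hadd a ha.1 b hb.1, ha.2, hb.2, add_zero]⟩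
      inv_mem' := fun {a} ha => ⟨inv_mem ha.1, by
        have := hadd a ha.1 a⁻¹ (inv_mem ha.1)
        rw [mul_inv_cancel, h1, ha.2] at this
        linarith⟩ }
  have hle : ⁅M, M⁆ ≤ K := Subgroup.commutator_le.mpr fun g hg h hh =>
    ⟨Subgroup.commutator_mem_commutator hg hh, hc g hg h hh⟩
  exact fun a ha => (hle ha).2

/-- The transfer of a `G`-invariant homomorphism `τ` on a normal subgroup `N` of finite index: its
value at `z ∈ N` is a positive multiple of `τ z`, so it is nontrivial as soon as `τ` is. -/
lemma exists_hom_of_finiteIndex {G : Type*} [Group G] (N : Subgroup G) [N.Normal]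
    [N.FiniteIndex] (τ : G → ℝ) (hadd : ∀ a ∈ N, ∀ b ∈ N, τ (a * b) = τ a + τ b)
    (hinv : ∀ g, ∀ a ∈ N, τ (g * a * g⁻¹) = τ a) (z : G) (hz : z ∈ N) (hτz : 0 < τ z) :
    ∃ φ : G →* Multiplicative ℝ, φ ≠ 1 := by
  classical
  let ϕ : N →* Multiplicative ℝ := MonoidHom.mk' (fun a => Multiplicative.ofAdd (τ a))
    (fun a b => by
      rw [← ofAdd_add, ← hadd a a.2 b b.2]; rfl)
  have h1 : τ 1 = 0 := by
    have := hadd 1 (one_mem _) 1 (one_mem _)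
    rw [mul_one] at this
    linarith
  have hpow : ∀ k : ℕ, τ (z ^ k) = k * τ z := by
    intro k
    induction k with
    | zero => simp [h1]
    | succ k ih => rw [pow_succ, hadd _ (N.pow_mem hz k) _ hz, ih]; push_cast; ring
  have : Finite (G ⧸ N) := inferInstance
  have : Fintype (Quotient (MulAction.orbitRel (Subgroup.zpowers z) (G ⧸ N))) :=
    Fintype.ofFinite _
  refine ⟨MonoidHom.transfer ϕ, fun h => ?_⟩
  have e := MonoidHom.transfer_eq_prod_quotient_orbitRel_zpowers_quot ϕ z
  rw [h] at e
  have e2 := congrArg Multiplicative.toAdd e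
  rw [toAdd_prod] at e2
  -- each orbit of `z` on `G ⧸ N`, of length `p`, contributes `τ` of a conjugate of `z ^ p`
  have : Nonempty (Quotient (MulAction.orbitRel (Subgroup.zpowers z) (G ⧸ N))) :=
    ⟨Quotient.mk _ ((1 : G) : G ⧸ N)⟩
  refine absurd e2 (ne_of_lt ?_)
  refine Finset.sum_pos (fun q _ => ?_) Finset.univ_nonempty
  have hp : 0 < Function.minimalPeriod (z • · : G ⧸ N → G ⧸ N) q.out :=
    Function.minimalPeriod_pos_of_mem_periodicPts
      ((MulAction.injective z).mem_periodicPts q.out)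
  change 0 < τ _
  have := hinv (q.out.out)⁻¹ (z ^ Function.minimalPeriod (z • · : G ⧸ N → G ⧸ N) q.out)
    (N.pow_mem hz _)
  rw [inv_inv] at this
  change 0 < τ ((q.out.out)⁻¹ * z ^ Function.minimalPeriod (z • · : G ⧸ N → G ⧸ N) q.out *
    q.out.out)
  rw [this, hpow]
  positivity

/-! ### Fixed points of monotone actions -/

section Action

variable {G X : Type*} [Group G] [CompleteLinearOrder X] [MulAction G X]

/-- `Y` is a nice piece of a monotone action of `G` on a complete linear order `X`: it is
`G`-invariant, it contains the suprema and infima of its `ℤ`-indexed families bounded in `Y`, and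
the elements of the subgroup `A` commute with each other when acting on `Y`. -/
structure IsStage (A : Subgroup G) (Y : Set X) : Prop where
  mono : ∀ (g : G) (x y : X), x ≤ y → g • x ≤ g • y
  smul_mem : ∀ (g : G), ∀ y ∈ Y, g • y ∈ Y
  sup_mem : ∀ f : ℤ → X, (∀ n, f n ∈ Y) → ∀ w ∈ Y, (∀ n, f n ≤ w) → (⨆ n, f n) ∈ Y
  inf_mem : ∀ f : ℤ → X, (∀ n, f n ∈ Y) → ∀ w ∈ Y, (∀ n, w ≤ f n) → (⨅ n, f n) ∈ Y
  comm : ∀ a ∈ A, ∀ b ∈ A, ∀ y ∈ Y, a • b • y = b • a • y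

lemma smul_le_iff (hm : ∀ (g : G) (x y : X), x ≤ y → g • x ≤ g • y) (g : G) {x y : X} :
    g • x ≤ g • y ↔ x ≤ y :=
  ⟨fun h => by simpa using hm g⁻¹ _ _ h, hm g _ _⟩

lemma smul_lt_iff (hm : ∀ (g : G) (x y : X), x ≤ y → g • x ≤ g • y) (g : G) {x y : X} :
    g • x < g • y ↔ x < y := by
  rw [lt_iff_not_ge, lt_iff_not_ge, smul_le_iff hm]

lemma smul_iSup_zpow (hm : ∀ (g : G) (x y : X), x ≤ y → g • x ≤ g • y) (b : G) (y : X) :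
    b • (⨆ n : ℤ, b ^ n • y) = ⨆ n : ℤ, b ^ n • y := by
  apply le_antisymm
  · have : (⨆ n : ℤ, b ^ n • y) ≤ b⁻¹ • (⨆ n : ℤ, b ^ n • y) := by
      refine iSup_le fun n => ?_
      have := hm b⁻¹ _ _ (le_iSup (fun n : ℤ => b ^ n • y) (n + 1))
      rwa [← mul_smul, add_comm, zpow_one_add, inv_mul_cancel_left] at this
    simpa using hm b _ _ this
  · refine iSup_le fun n => ?_
    have := hm b _ _ (le_iSup (fun n : ℤ => b ^ n • y) (n - 1))
    rwa [← mul_smul, ← zpow_one_add, add_sub_cancel] at this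

lemma smul_iInf_zpow (hm : ∀ (g : G) (x y : X), x ≤ y → g • x ≤ g • y) (b : G) (y : X) :
    b • (⨅ n : ℤ, b ^ n • y) = ⨅ n : ℤ, b ^ n • y := by
  apply le_antisymm
  · refine le_iInf fun n => ?_
    have := hm b _ _ (iInf_le (fun n : ℤ => b ^ n • y) (n - 1))
    rwa [← mul_smul, ← zpow_one_add, add_sub_cancel] at this
  · have : b⁻¹ • (⨅ n : ℤ, b ^ n • y) ≤ (⨅ n : ℤ, b ^ n • y) := by
      refine le_iInf fun n => ?_
      have := hm b⁻¹ _ _ (iInf_le (fun n : ℤ => b ^ n • y) (n + 1))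
      rwa [← mul_smul, add_comm, zpow_one_add, inv_mul_cancel_left] at this
    simpa using hm b _ _ this

lemma smul_iSup_of_fixed (hm : ∀ (g : G) (x y : X), x ≤ y → g • x ≤ g • y) (c : G) (f : ℤ → X)
    (hc : ∀ n, c • f n = f n) : c • (⨆ n, f n) = ⨆ n, f n := by
  apply le_antisymm
  · have : (⨆ n, f n) ≤ c⁻¹ • (⨆ n, f n) := iSup_le fun n => by
      rw [← smul_le_iff hm c, hc, smul_inv_smul]; exact le_iSup f n
    simpa using hm c _ _ this
  · exact iSup_le fun n => by rw [← hc n]; exact hm c _ _ (le_iSup f n)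

lemma smul_iInf_of_fixed (hm : ∀ (g : G) (x y : X), x ≤ y → g • x ≤ g • y) (c : G) (f : ℤ → X)
    (hc : ∀ n, c • f n = f n) : c • (⨅ n, f n) = ⨅ n, f n := by
  apply le_antisymm
  · exact le_iInf fun n => by rw [← hc n]; exact hm c _ _ (iInf_le f n)
  · have : c⁻¹ • (⨅ n, f n) ≤ (⨅ n, f n) := le_iInf fun n => by
      rw [← smul_le_iff hm c, hc, smul_inv_smul]; exact iInf_le f n
    simpa using hm c _ _ this

variable {A : Subgroup G} {Y : Set X}

/-- If `b` has no fixed point in `Y`, its orbits in `Y` are unbounded, since the supremum of a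
bounded orbit is fixed. -/
lemma IsStage.exists_lt_zpow (h : IsStage A Y) {b : G} (hb : ∀ y ∈ Y, b • y ≠ y) {y w : X}
    (hy : y ∈ Y) (hw : w ∈ Y) : ∃ n : ℤ, w < b ^ n • y := by
  by_contra! hcon
  exact hb _ (h.sup_mem _ (fun n => h.smul_mem _ _ hy) w hw hcon) (smul_iSup_zpow h.mono b y)

/-- Finitely many elements of `A` having fixed points in `Y` have a common one: the orbit under `b`
of a common fixed point `C` of the others is bounded by a fixed point `D` of `b`, and its supremum
or infimum is fixed by all of them. -/
lemma IsStage.exists_common_fixed (h : IsStage A Y) (hne : Y.Nonempty) (F : Finset G)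
    (hFA : ∀ b ∈ F, b ∈ A) (hF : ∀ b ∈ F, ∃ y ∈ Y, b • y = y) :
    ∃ y ∈ Y, ∀ b ∈ F, b • y = y := by
  classical
  induction F using Finset.induction_on with
  | empty => obtain ⟨y, hy⟩ := hne; exact ⟨y, hy, by simp⟩
  | insert b F _ ih =>
    obtain ⟨C, hC, hCF⟩ := ih (fun c hc => hFA c (Finset.mem_insert_of_mem hc))
      (fun c hc => hF c (Finset.mem_insert_of_mem hc))
    obtain ⟨D, hD, hDb⟩ := hF b (Finset.mem_insert_self _ _)
    have hbA := hFA b (Finset.mem_insert_self _ _)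
    have hDn : ∀ n : ℤ, b ^ n • D = D := fun n =>
      MulAction.mem_stabilizer_iff.mp
        (Subgroup.zpow_mem _ (MulAction.mem_stabilizer_iff.mpr hDb) n)
    have hfix : ∀ c ∈ F, ∀ n : ℤ, c • b ^ n • C = b ^ n • C := fun c hc n => by
      rw [h.comm c (hFA c (Finset.mem_insert_of_mem hc)) _ (A.zpow_mem hbA n) C hC, hCF c hc]
    rcases le_total C D with hle | hle
    · refine ⟨⨆ n : ℤ, b ^ n • C, h.sup_mem _ (fun n => h.smul_mem _ _ hC) D hD
        (fun n => (h.mono (b ^ n) _ _ hle).trans (hDn n).le), ?_⟩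
      simp only [Finset.mem_insert, forall_eq_or_imp]
      exact ⟨smul_iSup_zpow h.mono b C, fun c hc => smul_iSup_of_fixed h.mono c _ (hfix c hc)⟩
    · refine ⟨⨅ n : ℤ, b ^ n • C, h.inf_mem _ (fun n => h.smul_mem _ _ hC) D hD
        (fun n => (hDn n).ge.trans (h.mono (b ^ n) _ _ hle)), ?_⟩
      simp only [Finset.mem_insert, forall_eq_or_imp]
      exact ⟨smul_iInf_zpow h.mono b C, fun c hc => smul_iInf_of_fixed h.mono c _ (hfix c hc)⟩

lemma IsStage.exists_fixed_of_fg (h : IsStage A Y) (hne : Y.Nonempty) (B : Subgroup G)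
    (hBA : B ≤ A) (hfg : B.FG) (hB : ∀ b ∈ B, ∃ y ∈ Y, b • y = y) :
    ∃ y ∈ Y, ∀ b ∈ B, b • y = y := by
  obtain ⟨F, rfl⟩ := hfg
  obtain ⟨y, hy, hyF⟩ := h.exists_common_fixed hne F
    (fun b hb => hBA (Subgroup.subset_closure hb)) (fun b hb => hB b (Subgroup.subset_closure hb))
  refine ⟨y, hy, fun b hb => ?_⟩
  have : Subgroup.closure (F : Set G) ≤ MulAction.stabilizer G y :=
    (Subgroup.closure_le _).mpr fun b hb => hyF b hb
  exact this hb

/-- The elements of `A` with a fixed point in `Y`. They form a subgroup because two of them always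
have a common fixed point. -/
def IsStage.elliptic (h : IsStage A Y) (hne : Y.Nonempty) : Subgroup G where
  carrier := {a | a ∈ A ∧ ∃ y ∈ Y, a • y = y}
  one_mem' := ⟨A.one_mem, by obtain ⟨y, hy⟩ := hne; exact ⟨y, hy, one_smul _ _⟩⟩
  mul_mem' := by
    classical
    rintro a b ⟨ha, hay⟩ ⟨hb, hby⟩
    obtain ⟨y, hy, hyF⟩ := h.exists_common_fixed hne {a, b} (by simp [ha, hb]) (by simp [hay, hby])
    simp only [Finset.mem_insert, Finset.mem_singleton, forall_eq_or_imp, forall_eq] at hyF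
    exact ⟨A.mul_mem ha hb, y, hy, by rw [mul_smul, hyF.2, hyF.1]⟩
  inv_mem' := by
    rintro a ⟨ha, y, hy, hay⟩
    exact ⟨A.inv_mem ha, y, hy, by rw [inv_smul_eq_iff, hay]⟩

/-- The translates `z ^ k • x` of a point by a fixed-point free `z` cut `Y` into half-open
intervals. -/
lemma IsStage.exists_floor (h : IsStage A Y) {z : G} (hz : ∀ y ∈ Y, z • y ≠ y) {x : X}
    (hx : x ∈ Y) (hzx : x < z • x) {y : X} (hy : y ∈ Y) :
    ∃ k : ℤ, z ^ k • x ≤ y ∧ y < z ^ (k + 1) • x := by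
  have hmono : StrictMono fun n : ℤ => z ^ n • x := strictMono_int_of_lt_succ fun n => by
    rw [zpow_add_one, mul_smul]; exact (smul_lt_iff h.mono _).mpr hzx
  obtain ⟨n, hn⟩ := h.exists_lt_zpow hz hx hy
  obtain ⟨m, hm⟩ := h.exists_lt_zpow hz hy hx
  obtain ⟨k, hk, hk'⟩ := Int.exists_greatest_of_bdd (P := fun k : ℤ => z ^ k • x ≤ y)
    ⟨n, fun k hk => (hmono.lt_iff_lt.mp (hk.trans_lt hn)).le⟩
    ⟨-m, by
      have := h.mono (z ^ (-m)) _ _ hm.le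
      rwa [zpow_neg, inv_smul_smul, ← zpow_neg] at this⟩
  exact ⟨k, hk, lt_of_not_ge fun hle => by have := hk' _ hle; omega⟩

end Action

/-! ### Translation numbers -/

section Action

variable {G X : Type*} [Group G] [CompleteLinearOrder X] [MulAction G X]
variable {A : Subgroup G} {Y : Set X}

/-- Real valued homomorphisms on `A` with `0 < τ a → 0 < σ a` are proportional, by comparison with
rational multiples of an element `z` with `τ z = 1`. -/
lemma eq_mul_of_pos_imp_pos (A : Subgroup G) (τ σ : G → ℝ)
    (hτ : ∀ a ∈ A, ∀ b ∈ A, τ (a * b) = τ a + τ b)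
    (hσ : ∀ a ∈ A, ∀ b ∈ A, σ (a * b) = σ a + σ b)
    (hpos : ∀ a ∈ A, 0 < τ a → 0 < σ a) {z : G} (hz : z ∈ A) (hz1 : τ z = 1) :
    ∀ a ∈ A, σ a = σ z * τ a := by
  have hzpow : ∀ ρ : G → ℝ, (∀ a ∈ A, ∀ b ∈ A, ρ (a * b) = ρ a + ρ b) → ∀ a ∈ A, ∀ n : ℤ,
      ρ (a ^ n) = n * ρ a := by
    intro ρ hρ a ha n
    let r : A →* Multiplicative ℝ := MonoidHom.mk' (fun a => Multiplicative.ofAdd (ρ a))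
      (fun a b => by rw [← ofAdd_add, ← hρ a a.2 b b.2]; rfl)
    have := congrArg Multiplicative.toAdd (map_zpow r ⟨a, ha⟩ n)
    rw [toAdd_zpow, zsmul_eq_mul] at this
    exact this
  have hσz : 0 < σ z := hpos z hz (by rw [hz1]; norm_num)
  have hge : ∀ a ∈ A, σ z * τ a ≤ σ a := by
    intro a ha
    by_contra! hlt
    rw [mul_comm, ← div_lt_iff₀ hσz] at hlt
    obtain ⟨q, hq1, hq2⟩ := exists_rat_btwn hlt
    have hd : (0 : ℝ) < q.den := by exact_mod_cast q.den_pos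
    have hqe : (q : ℝ) = q.num / q.den := by exact_mod_cast (Rat.num_div_den q).symm
    have hmem := A.zpow_mem ha (q.den : ℤ)
    have hmem' := A.zpow_mem hz (-q.num)
    have hp := hpos _ (A.mul_mem hmem hmem')
    rw [hτ _ hmem _ hmem', hσ _ hmem _ hmem', hzpow τ hτ a ha, hzpow τ hτ z hz,
      hzpow σ hσ a ha, hzpow σ hσ z hz, hz1] at hp
    push_cast at hp
    rw [hqe, lt_div_iff₀ hd] at hq1
    rw [hqe, div_lt_iff₀ hd] at hq2
    have h1 := hp (by linarith)
    rw [div_mul_eq_mul_div, div_lt_iff₀ hσz] at hq1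
    linarith
  intro a ha
  refine le_antisymm ?_ (hge a ha)
  have h1 := hge _ (A.zpow_mem ha (-1))
  rw [hzpow τ hτ a ha, hzpow σ hσ a ha] at h1
  push_cast at h1
  linarith

/-- Suppose `A` is normal in `G` and has no global fixed point in `Y`. Then some `z ∈ A` acts freely
on `Y`, and rounding `g • x` down to a translate `z ^ k • x` defines a function `f` whose
homogenization `τ : A → ℝ` is a nonzero homomorphism with kernel the elliptic elements. Conjugation
by `g` rescales `τ` by a factor `σ g > 0`. Either `log ∘ σ` is a nonzero homomorphism on `G`, or
`τ` is conjugation invariant; then every `g` commutes with `z` up to elliptic elements, which fix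
`x`, and `f` is almost additive on all of `G`. -/
theorem IsStage.exists_hom_or (h : IsStage A Y) (hne : Y.Nonempty) [hA : A.Normal]
    (hfg : ∀ B ≤ A, B.FG) (hnf : ∀ y ∈ Y, ∃ a ∈ A, a • y ≠ y) :
    (∃ φ : G →* Multiplicative ℝ, φ ≠ 1) ∨
    ∃ (τ : G → ℝ) (f : G → ℤ) (z : G), z ∈ A ∧ τ z = 1 ∧
      (∀ a ∈ A, ∀ b ∈ A, τ (a * b) = τ a + τ b) ∧
      (∀ a ∈ A, |(f a : ℝ) - τ a| ≤ 1) ∧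
      (∀ g, ∀ a ∈ A, τ (g * a * g⁻¹) = τ a) ∧
      (∀ g k, f g + f k ≤ f (g * k) ∧ f (g * k) ≤ f g + f k + 1) := by
  have hm := h.mono
  set K := h.elliptic hne with hKdef
  have hKA : K ≤ A := fun a ha => ha.1
  obtain ⟨x, hx, hKx⟩ := h.exists_fixed_of_fg hne K hKA (hfg K hKA) (fun b hb => hb.2)
  -- an element of `A` without fixed points, moving `x` up
  obtain ⟨z, hzA, hz, hzx⟩ : ∃ z ∈ A, (∀ y ∈ Y, z • y ≠ y) ∧ x < z • x := by
    obtain ⟨z, hzA, hz⟩ : ∃ z ∈ A, ∀ y ∈ Y, z • y ≠ y := by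
      by_contra! hcon
      obtain ⟨y, hy, hyA⟩ := h.exists_fixed_of_fg hne A le_rfl (hfg A le_rfl) hcon
      obtain ⟨a, ha, hay⟩ := hnf y hy
      exact hay (hyA a ha)
    rcases lt_or_gt_of_ne (hz x hx) with hlt | hlt
    · refine ⟨z⁻¹, A.inv_mem hzA, fun y hy he => hz y hy (inv_smul_eq_iff.mp he).symm, ?_⟩
      rw [← smul_lt_iff hm z, smul_inv_smul]
      exact hlt
    · exact ⟨z, hzA, hz, hlt⟩
  have hmono : StrictMono fun n : ℤ => z ^ n • x := strictMono_int_of_lt_succ fun n => by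
    rw [zpow_add_one, mul_smul]; exact (smul_lt_iff hm _).mpr hzx
  have hfl : ∀ g : G, ∃ k : ℤ, z ^ k • x ≤ g • x ∧ g • x < z ^ (k + 1) • x := fun g =>
    h.exists_floor hz hx hzx (h.smul_mem g x hx)
  choose f hf1 hf2 using hfl
  have le_f : ∀ (g : G) (k : ℤ), z ^ k • x ≤ g • x → k ≤ f g := fun g k hk => by
    have := hmono.lt_iff_lt.mp (hk.trans_lt (hf2 g)); omega
  have f_lt : ∀ (g : G) (k : ℤ), g • x < z ^ k • x → f g < k := fun g k hk =>
    hmono.lt_iff_lt.mp ((hf1 g).trans_lt hk)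
  have f_congr : ∀ g k : G, g • x = k • x → f g = f k := fun g k he =>
    le_antisymm (le_f _ _ (he ▸ hf1 g)) (le_f _ _ (he ▸ hf1 k))
  -- if `g` commutes with the powers of `z` at `x`, then `f` is almost additive at `g`
  have hquasi : ∀ g : G, (∀ n : ℤ, g • z ^ n • x = z ^ n • g • x) → ∀ k : G,
      f g + f k ≤ f (g * k) ∧ f (g * k) ≤ f g + f k + 1 := by
    intro g hg k
    constructor
    · apply le_f
      rw [add_comm, zpow_add, mul_smul, mul_smul]
      calc z ^ f k • z ^ f g • x ≤ z ^ f k • g • x := hm _ _ _ (hf1 g)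
        _ = g • z ^ f k • x := (hg _).symm
        _ ≤ g • k • x := hm _ _ _ (hf1 k)
    · rw [← Int.lt_add_one_iff]
      apply f_lt
      rw [show f g + f k + 1 + 1 = (f k + 1) + (f g + 1) by ring, zpow_add z, mul_smul, mul_smul]
      calc g • k • x < g • z ^ (f k + 1) • x := (smul_lt_iff hm _).mpr (hf2 k)
        _ = z ^ (f k + 1) • g • x := hg _
        _ < _ := (smul_lt_iff hm _).mpr (hf2 g)
  have hA1 : ∀ a ∈ A, ∀ n : ℤ, a • z ^ n • x = z ^ n • a • x := fun a ha n =>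
    h.comm a ha _ (A.zpow_mem hzA n) x hx
  have hpowx : ∀ a ∈ A, ∀ b ∈ A, ∀ n : ℕ, (a * b) ^ n • x = (a ^ n * b ^ n) • x := by
    intro a ha b hb n
    induction n with
    | zero => simp
    | succ n ih =>
      rw [pow_succ', mul_smul, ih, mul_smul, mul_smul, pow_succ' a, pow_succ' b, mul_smul,
        mul_smul, mul_smul, h.comm b hb _ (A.pow_mem ha n) _ (h.smul_mem _ _ hx)]
  obtain ⟨τ, hadd, hτ⟩ := exists_translation A f (fun a ha b _ => hquasi a (hA1 a ha) b)
    (fun a ha b hb n => f_congr _ _ (hpowx a ha b hb n))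
  have hτ1 : ∀ a ∈ A, |(f a : ℝ) - τ a| ≤ 1 := fun a ha => by simpa using hτ a ha 1
  have hone : τ 1 = 0 := by
    have := hadd 1 (one_mem _) 1 (one_mem _)
    rw [mul_one] at this
    linarith
  have hinv : ∀ a ∈ A, τ a⁻¹ = - τ a := fun a ha => by
    have := hadd a ha _ (A.inv_mem ha)
    rw [mul_inv_cancel, hone] at this
    linarith
  have hfz : ∀ n : ℕ, f (z ^ n) = n := fun n => by
    have e1 := le_f (z ^ n) n (by rw [zpow_natCast])
    have e2 := f_lt (z ^ n) (n + 1) (by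
      rw [← zpow_natCast]; exact hmono (by omega))
    omega
  have hτz : τ z = 1 := by
    rw [eq_comm, ← sub_eq_zero]
    refine eq_zero_of_forall_nat_mul_le (C := 1) fun n => ?_
    have := hτ z hzA n
    rwa [hfz, Int.cast_natCast, ← mul_one_sub, ← nat_mul_abs] at this
  -- without fixed points, some power of `a` moves `x` beyond `z ^ 2 • x`, too far for `τ a = 0`
  have hker : ∀ a ∈ A, τ a = 0 → a ∈ K := by
    intro a ha h0
    refine ⟨ha, ?_⟩
    by_contra! hcon
    obtain ⟨n, hn⟩ := h.exists_lt_zpow hcon hx (h.smul_mem (z ^ (2 : ℤ)) x hx)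
    have hle : ∀ b ∈ A, τ b = 0 → ∀ m : ℕ, f (b ^ m) ≤ 1 := fun b hb hb0 m => by
      have := hτ b hb m
      rw [hb0, mul_zero, sub_zero, abs_le] at this
      exact_mod_cast this.2
    have h2 : 2 ≤ f (a ^ n) := le_f _ _ hn.le
    obtain ⟨m, rfl | rfl⟩ := n.eq_nat_or_neg
    · have := hle a ha h0 m
      rw [zpow_natCast] at h2
      omega
    · have := hle a⁻¹ (A.inv_mem ha) (by rw [hinv a ha, h0, neg_zero]) m
      rw [zpow_neg, zpow_natCast, ← inv_pow] at h2
      omega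
  -- The points `z ^ k • g⁻¹ • x > x` and `z ^ l • x` are chosen so that a power `a ^ n` that moves
  -- `x` up to `z ^ l • x` moves `g⁻¹ • x` beyond `g⁻¹ • z ^ 2 • x`. Then `g * a ^ n * g⁻¹` moves
  -- `x` beyond `z ^ 2 • x`.
  have hcpos : ∀ g, ∀ a ∈ A, 0 < τ a → 0 < τ (g * a * g⁻¹) := by
    intro g a ha hpos
    obtain ⟨k, hk⟩ := h.exists_lt_zpow hz (h.smul_mem g⁻¹ x hx) hx
    obtain ⟨l, hl⟩ := h.exists_lt_zpow hz hx
      (h.smul_mem (z ^ k) _ (h.smul_mem g⁻¹ _ (h.smul_mem (z ^ (2 : ℤ)) x hx)))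
    obtain ⟨n, hn⟩ : ∃ n : ℕ, l ≤ f (a ^ n) := by
      obtain ⟨n, hn⟩ := exists_nat_gt ((l + 1 : ℝ) / τ a)
      rw [div_lt_iff₀ hpos] at hn
      refine ⟨n, ?_⟩
      have := (abs_le.mp (hτ a ha n)).1
      have : (l : ℝ) ≤ f (a ^ n) := by linarith
      exact_mod_cast this
    have hxa : z ^ k • g⁻¹ • z ^ (2 : ℤ) • x < a ^ n • z ^ k • g⁻¹ • x :=
      calc z ^ k • g⁻¹ • z ^ (2 : ℤ) • x < z ^ l • x := hl
        _ ≤ z ^ f (a ^ n) • x := hmono.monotone hn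
        _ ≤ a ^ n • x := hf1 _
        _ ≤ _ := hm _ _ _ hk.le
    rw [h.comm _ (A.pow_mem ha n) _ (A.zpow_mem hzA k) _ (h.smul_mem _ _ hx),
      smul_lt_iff hm, ← smul_lt_iff hm g, smul_inv_smul, ← mul_smul (a ^ n), ← mul_smul g,
      ← mul_assoc, ← conj_pow] at hxa
    have h2 : (2 : ℝ) ≤ f ((g * a * g⁻¹) ^ n) := by exact_mod_cast le_f _ _ hxa.le
    have h3 := (abs_le.mp (hτ _ (hA.conj_mem a ha g) n)).2
    exact pos_of_mul_pos_right (by linarith : 0 < (n : ℝ) * τ (g * a * g⁻¹)) n.cast_nonneg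
  let σ : G → ℝ := fun g => τ (g * z * g⁻¹)
  have hσ : ∀ g, ∀ a ∈ A, τ (g * a * g⁻¹) = σ g * τ a := by
    intro g
    exact eq_mul_of_pos_imp_pos A τ (fun a => τ (g * a * g⁻¹)) hadd (fun a ha b hb => by
      rw [← hadd _ (hA.conj_mem a ha g) _ (hA.conj_mem b hb g)]; congr 1; group)
      (hcpos g) hzA hτz
  have hσpos : ∀ g, 0 < σ g := fun g => hcpos g z hzA (by rw [hτz]; exact one_pos)
  have hσmul : ∀ g k, σ (g * k) = σ g * σ k := fun g k => by
    rw [← hσ g _ (hA.conj_mem z hzA k)]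
    change τ _ = τ _
    congr 1; group
  by_cases htriv : ∀ g, σ g = 1
  swap
  · left
    push Not at htriv
    obtain ⟨g, hg⟩ := htriv
    refine ⟨MonoidHom.mk' (fun g => Multiplicative.ofAdd (Real.log (σ g))) (fun g k => by
      rw [← ofAdd_add, hσmul, Real.log_mul (hσpos g).ne' (hσpos k).ne']), fun he => hg ?_⟩
    have := congrArg Multiplicative.toAdd (DFunLike.congr_fun he g)
    exact Real.eq_one_of_pos_of_log_eq_zero (hσpos g) this
  have hcinv : ∀ g, ∀ a ∈ A, τ (g * a * g⁻¹) = τ a := fun g a ha => by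
    rw [hσ g a ha, htriv, one_mul]
  refine Or.inr ⟨τ, f, z, hzA, hτz, hadd, hτ1, hcinv, fun g => hquasi g fun n => ?_⟩
  -- `z ^ n` and its conjugate by `g⁻¹` have the same `τ`, so they agree at `x`
  have hw := A.zpow_mem hzA n
  have hc : (z ^ n)⁻¹ * (g⁻¹ * z ^ n * g⁻¹⁻¹) ∈ K := by
    refine hker _ (A.mul_mem (A.inv_mem hw) (hA.conj_mem _ hw _)) ?_
    rw [hadd _ (A.inv_mem hw) _ (hA.conj_mem _ hw _), hinv _ hw, hcinv _ _ hw, neg_add_cancel]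
  have := hKx _ hc
  rw [inv_inv, mul_smul, inv_smul_eq_iff, mul_smul, mul_smul, inv_smul_eq_iff] at this
  exact this.symm

end Action

/-! ### Homomorphisms to the reals -/

/-- The derived series of a subgroup `N`, as a sequence of subgroups of the ambient group. -/
def derivedIn {G : Type*} [Group G] (N : Subgroup G) : ℕ → Subgroup G
  | 0 => N
  | n + 1 => ⁅derivedIn N n, derivedIn N n⁆

lemma derivedIn_normal {G : Type*} [Group G] (N : Subgroup G) [hN : N.Normal] (n : ℕ) :
    (derivedIn N n).Normal := by
  induction n with
  | zero => exact hN
  | succ n ih => exact Subgroup.commutator_normal _ _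

lemma derivedIn_eq_map {G : Type*} [Group G] (N : Subgroup G) (n : ℕ) :
    derivedIn N n = (derivedSeries N n).map N.subtype := by
  induction n with
  | zero => rw [derivedIn, derivedSeries_zero, ← MonoidHom.range_eq_map, Subgroup.range_subtype]
  | succ n ih => rw [derivedIn, ih, derivedSeries_succ, Subgroup.map_commutator]

section Action

variable {G X : Type*} [Group G] [CompleteLinearOrder X] [MulAction G X]

/-- A monotone action on a linear order has no nontrivial finite orbits. -/
lemma smul_eq_of_finiteIndex (hm : ∀ (g : G) (x y : X), x ≤ y → g • x ≤ g • y)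
    (N : Subgroup G) [N.FiniteIndex] {x : X} (hN : ∀ a ∈ N, a • x = x) (g : G) : g • x = x := by
  have key : ∀ g : G, ¬ x < g • x := by
    intro g hlt
    have hpow : ∀ n : ℕ, x < g ^ (n + 1) • x := by
      intro n
      induction n with
      | zero => simpa using hlt
      | succ n ih =>
        rw [pow_succ', mul_smul]
        exact hlt.trans ((smul_lt_iff hm g).mpr ih)
    obtain ⟨n, hn, -, hmem⟩ :=
      Subgroup.exists_pow_mem_of_index_ne_zero (Subgroup.FiniteIndex.index_ne_zero (H := N)) g
    have := hpow (n - 1)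
    rw [Nat.sub_add_cancel hn, hN _ hmem] at this
    exact lt_irrefl _ this
  refine le_antisymm (not_lt.mp (key g)) (not_lt.mp fun hlt => key g⁻¹ ?_)
  rw [← smul_lt_iff hm g, smul_inv_smul]
  exact hlt

/-- Induction on `d`. If the `d`-th derived group `A` fixes a point of the stage `Y` below, which
`G` still moves, induction applies to that point. Otherwise `IsStage.exists_hom_or` yields either a
homomorphism on `G` or an invariant `τ ≠ 0` on `A`. For `d = 0` the transfer extends `τ` to `G`, and
for `d > 0` the group `A` is generated by commutators, on which `τ` vanishes. -/
theorem exists_real_hom_of_action (hm : ∀ (g : G) (x y : X), x ≤ y → g • x ≤ g • y)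
    (hfg : ∀ B : Subgroup G, B.FG) (N : Subgroup G) [N.Normal] [N.FiniteIndex] (d : ℕ) :
    ∀ x : X, (∃ g : G, g • x ≠ x) → (∀ a ∈ derivedIn N d, a • x = x) →
      ∃ φ : G →* Multiplicative ℝ, φ ≠ 1 := by
  induction d with
  | zero =>
    rintro x ⟨g, hg⟩ hx
    exact absurd (smul_eq_of_finiteIndex hm N hx g) hg
  | succ d ih =>
    rintro x ⟨g₀, hg₀⟩ hx
    have hA := derivedIn_normal N d
    have hA' := derivedIn_normal N (d + 1)
    have hIx : (⨅ g : G, g • x) < x := by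
      refine lt_of_le_of_ne ((iInf_le _ 1).trans (one_smul G x).le) fun he => ?_
      have h1 : ∀ g : G, x ≤ g • x := fun g => he.ge.trans (iInf_le _ g)
      refine hg₀ (le_antisymm ?_ (h1 g₀))
      simpa using hm g₀ _ _ (h1 g₀⁻¹)
    have hxS : x < (⨆ g : G, g • x) := by
      refine lt_of_le_of_ne ((one_smul G x).ge.trans (le_iSup (fun g : G => g • x) 1)) fun he => ?_
      have h1 : ∀ g : G, g • x ≤ x := fun g => (le_iSup (fun g : G => g • x) g).trans he.ge
      refine hg₀ (le_antisymm (h1 g₀) ?_)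
      simpa using hm g₀ _ _ (h1 g₀⁻¹)
    -- the points strictly inside the convex hull of the orbit of `x`, none of them fixed by `G`,
    -- on which the commutator subgroup of `A` acts trivially
    let Y : Set X := {y | (⨅ g : G, g • x) < y ∧ y < (⨆ g : G, g • x) ∧
      ∀ a ∈ derivedIn N (d + 1), a • y = y}
    have hxY : x ∈ Y := ⟨hIx, hxS, hx⟩
    have hYmem : ∀ y ∈ Y, ∃ g : G, g • y ≠ y := by
      rintro y ⟨h1, h2, -⟩
      by_contra! hcon
      obtain ⟨g, hg⟩ := iInf_lt_iff.mp h1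
      obtain ⟨k, hk⟩ := lt_iSup_iff.mp h2
      rw [← smul_lt_iff hm g⁻¹, inv_smul_smul, hcon] at hg
      rw [← smul_lt_iff hm k⁻¹, inv_smul_smul, hcon] at hk
      exact lt_asymm hg hk
    have hYsmul : ∀ g : G, ∀ y ∈ Y, g • y ∈ Y := by
      rintro g y ⟨h1, h2, h3⟩
      refine ⟨?_, ?_, fun a ha => ?_⟩
      · obtain ⟨k, hk⟩ := iInf_lt_iff.mp h1
        refine (iInf_le _ (g * k)).trans_lt ?_
        rw [mul_smul]
        exact (smul_lt_iff hm g).mpr hk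
      · obtain ⟨k, hk⟩ := lt_iSup_iff.mp h2
        refine lt_of_lt_of_le ?_ (le_iSup (fun g : G => g • x) (g * k))
        rw [mul_smul]
        exact (smul_lt_iff hm g).mpr hk
      · have := h3 _ (hA'.conj_mem a ha g⁻¹)
        rwa [inv_inv, mul_smul, mul_smul, inv_smul_eq_iff] at this
    have hst : IsStage (derivedIn N d) Y :=
      { mono := hm
        smul_mem := hYsmul
        sup_mem := fun f hf w hw hle => ⟨(hf 0).1.trans_le (le_iSup f 0),
          (iSup_le hle).trans_lt hw.2.1,
          fun a ha => smul_iSup_of_fixed hm a f fun n => (hf n).2.2 a ha⟩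
        inf_mem := fun f hf w hw hle => ⟨hw.1.trans_le (le_iInf hle),
          (iInf_le f 0).trans_lt (hf 0).2.1,
          fun a ha => smul_iInf_of_fixed hm a f fun n => (hf n).2.2 a ha⟩
        comm := fun a ha b hb y hy => by
          have := (hYsmul b _ (hYsmul a y hy)).2.2 _ (Subgroup.commutator_mem_commutator ha hb)
          rw [← this, commutatorElement_def]
          simp [mul_smul] }
    by_cases hfix : ∃ y ∈ Y, ∀ a ∈ derivedIn N d, a • y = y
    · obtain ⟨y, hy, hya⟩ := hfix
      exact ih y (hYmem y hy) hya
    push Not at hfix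
    rcases hst.exists_hom_or ⟨x, hxY⟩ (fun B _ => hfg B) hfix with hφ |
      ⟨τ, f, z, hzA, hτz, hadd, hτ, hinv, hf⟩
    · exact hφ
    · cases d with
      | zero =>
        exact exists_hom_of_finiteIndex N τ hadd hinv z hzA (by rw [hτz]; exact one_pos)
      | succ e =>
        have : (⁅derivedIn N e, derivedIn N e⁆ : Subgroup G).Normal := hA
        have := vanish_commutator (derivedIn N e) f τ hf hadd hτ hinv z hzA
        rw [hτz] at this
        exact absurd this one_ne_zero

end Action

/-- The group acts by left translation on the complete linear order of its lower sets, and every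
`g ≠ 1` moves the lower set of elements `≤ 1`. -/
theorem exists_real_hom {G : Type*} [Group G] [Nontrivial G] (hLO : ∃ P : Set G, IsPositiveCone P)
    (hfg : ∀ B : Subgroup G, B.FG) (N : Subgroup G) [N.Normal] [N.FiniteIndex]
    (hN : Group.IsSolvable N) : ∃ φ : G →* Multiplicative ℝ, φ ≠ 1 := by
  classical
  obtain ⟨P, hmul, htot, hasymm, hone⟩ := hLO
  -- the left-invariant order with positive cone `P`
  let _ : LinearOrder G :=
    { le := fun a b => a⁻¹ * b ∈ P ∨ a = b
      le_refl := fun a => Or.inr rfl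
      le_trans := by
        rintro a b c (h1 | rfl) (h2 | rfl)
        · left
          simpa [mul_assoc] using hmul _ h1 _ h2
        · exact Or.inl h1
        · exact Or.inl h2
        · exact Or.inr rfl
      le_antisymm := by
        rintro a b (h1 | rfl) (h2 | h2)
        · exact absurd (by simpa using h2) (hasymm _ h1)
        · exact h2.symm
        · rfl
        · rfl
      le_total := fun a b => by
        rcases htot (a⁻¹ * b) with h | h | h
        · exact Or.inl (Or.inl h)
        · right; left; simpa using h
        · left; right; exact inv_mul_eq_one.mp h
      toDecidableLE := Classical.decRel _ }
  have hle : ∀ g a b : G, a ≤ b → g * a ≤ g * b := by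
    rintro g a b (h | rfl)
    · left; simpa [mul_assoc] using h
    · exact le_rfl
  let _ : MulAction G (LowerSet G) :=
    { smul := fun g C => ⟨{a | g⁻¹ * a ∈ C}, fun a b hba ha => C.lower (hle g⁻¹ b a hba) ha⟩
      one_smul := fun C => by
        ext a; change (1 : G)⁻¹ * a ∈ C ↔ a ∈ C; simp
      mul_smul := fun g k C => by
        ext a; change (g * k)⁻¹ * a ∈ C ↔ k⁻¹ * (g⁻¹ * a) ∈ C; simp [mul_assoc] }
  have hmem : ∀ (g a : G) (C : LowerSet G), a ∈ g • C ↔ g⁻¹ * a ∈ C := fun _ _ _ => Iff.rfl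
  have hm : ∀ (g : G) (x y : LowerSet G), x ≤ y → g • x ≤ g • y := fun g x y hxy a ha =>
    hxy ha
  obtain ⟨n, hn⟩ := hN.solvable
  refine exists_real_hom_of_action hm hfg N n (LowerSet.Iic 1) ?_ ?_
  · obtain ⟨g, hg⟩ := exists_ne (1 : G)
    refine ⟨g, fun he => hg ?_⟩
    have h1 : (1 : G) ∈ g • LowerSet.Iic (1 : G) := by rw [he]; simp
    have h2 : g ∈ LowerSet.Iic (1 : G) := by rw [← he, hmem]; simp
    rw [hmem, mul_one, LowerSet.mem_Iic_iff] at h1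
    rw [LowerSet.mem_Iic_iff] at h2
    exact le_antisymm h2 (by simpa using hle g _ _ h1)
  · intro a ha
    rw [derivedIn_eq_map, hn, Subgroup.map_bot, Subgroup.mem_bot] at ha
    rw [ha, one_smul]

/-! ### Surjections onto the integers -/

/-- A finitely generated group with a nonzero homomorphism to `ℝ` surjects onto `ℤ`. -/
theorem exists_int_hom {G : Type*} [Group G] (hG : Group.FG G)
    (h : ∃ φ : G →* Multiplicative ℝ, φ ≠ 1) :
    ∃ ψ : G →* Multiplicative ℤ, Function.Surjective ψ := by
  obtain ⟨φ, hφ⟩ := h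
  -- the image of `φ`, a finitely generated torsion-free abelian group, is free
  let φ' : Additive G →+ ℝ := MonoidHom.toAdditiveLeft φ
  let M := φ'.range
  have : AddGroup.FG M := AddGroup.fg_range φ'
  have : Module.Finite ℤ M := Module.Finite.iff_addGroup_fg.mpr inferInstance
  let b := Module.Free.chooseBasis ℤ M
  obtain ⟨g, hg⟩ : ∃ g, φ g ≠ 1 := by
    by_contra! hcon
    exact hφ (MonoidHom.ext hcon)
  have hg' : φ'.rangeRestrict (Additive.ofMul g) ≠ 0 := fun h0 => hg (congrArg Subtype.val h0)
  obtain ⟨i, hi⟩ : ∃ i, b.repr (φ'.rangeRestrict (Additive.ofMul g)) i ≠ 0 := by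
    by_contra! hcon
    exact hg' (b.repr.map_eq_zero_iff.mp (Finsupp.ext hcon))
  let χ : Additive G →+ ℤ := (b.coord i).toAddMonoidHom.comp φ'.rangeRestrict
  -- a nonzero subgroup of `ℤ` is again infinite cyclic
  obtain ⟨m, hm⟩ := Int.subgroup_cyclic χ.range
  have hmem : ∀ a, ∃ k : ℤ, k * m = χ a := fun a => by
    have : χ a ∈ χ.range := ⟨a, rfl⟩
    rw [hm, AddSubgroup.mem_closure_singleton] at this
    simpa using this
  have hm0 : m ≠ 0 := by
    rintro rfl
    obtain ⟨k, hk⟩ := hmem (Additive.ofMul g)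
    have h0 : χ (Additive.ofMul g) = 0 := by simpa using hk.symm
    exact hi h0
  choose k hk using hmem
  refine ⟨MonoidHom.mk' (fun a => Multiplicative.ofAdd (k (Additive.ofMul a))) fun a c => ?_, ?_⟩
  · rw [← ofAdd_add]
    congr 1
    apply mul_right_cancel₀ hm0
    rw [add_mul, hk, hk, hk, ofMul_mul, map_add]
  · intro n
    have : m ∈ χ.range := by rw [hm]; exact AddSubgroup.subset_closure rfl
    obtain ⟨a, ha⟩ := this
    refine ⟨Additive.toMul (n.toAdd • a), ?_⟩
    change Multiplicative.ofAdd (k (n.toAdd • a)) = n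
    apply Multiplicative.toAdd.injective
    apply mul_right_cancel₀ hm0
    change k _ * m = _
    rw [hk, map_zsmul, ha, smul_eq_mul]

universe u

/-- A descending chain `H = s 0 ≥ s 1 ≥ … ≥ s n = 1` of subgroups of `G` in which each term is the
kernel of a homomorphism from the previous one to a cyclic group. All terms live in the ambient
group `G`, which need not be polycyclic itself. -/
structure IsCyclicSeries {G : Type u} [Group G] (H : Subgroup G) (n : ℕ) (s : ℕ → Subgroup G) :
    Prop where
  zero : s 0 = H
  last : s n = ⊥
  step : ∀ i < n, s (i + 1) ≤ s i ∧ ∃ (Q : Type u) (_ : Group Q) (q : s i →* Q),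
    IsCyclic Q ∧ q.ker = (s (i + 1)).subgroupOf (s i)

theorem exists_isCyclicSeries {G : Type u} [Group G] {H : Subgroup G} (hH : IsPolycyclic H) :
    ∃ n s, IsCyclicSeries H n s := by
  obtain ⟨n, s, h0, hn, hs⟩ := hH
  refine ⟨n, fun i => (s i).map H.subtype, by simp [h0, ← MonoidHom.range_eq_map], by simp [hn],
    fun i hi => ?_⟩
  obtain ⟨hle, hnorm, x, hx, hgen⟩ := hs i hi
  let e : (s i).map H.subtype ≃* s i :=
    ((s i).equivMapOfInjective H.subtype H.subtype_injective).symm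
  have he : ∀ g, H.subtype (e g) = g := fun g => by
    have := (s i).coe_equivMapOfInjective_apply H.subtype H.subtype_injective (e g)
    rw [← this]
    simp [e]
  refine ⟨Subgroup.map_mono hle, s i ⧸ (s (i + 1)).subgroupOf (s i), inferInstance,
    (QuotientGroup.mk' _).comp e.toMonoidHom, ⟨QuotientGroup.mk ⟨x, hx⟩, ?_⟩, ?_⟩
  · intro y
    induction y using QuotientGroup.induction_on with
    | H g =>
      obtain ⟨k, hk⟩ := hgen g g.2
      refine ⟨k, ?_⟩
      change QuotientGroup.mk ((⟨x, hx⟩ : s i) ^ k) = _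
      rw [QuotientGroup.eq, Subgroup.mem_subgroupOf]
      simpa using hk
  · ext g
    rw [MonoidHom.mem_ker, Subgroup.mem_subgroupOf]
    change QuotientGroup.mk (e g) = _ ↔ _
    rw [QuotientGroup.eq_one_iff, Subgroup.mem_subgroupOf, ← he g]
    exact (Subgroup.mem_map_iff_mem H.subtype_injective).symm

namespace IsCyclicSeries

variable {G : Type u} [Group G] {H : Subgroup G} {n : ℕ} {s : ℕ → Subgroup G}

/-- Subgroups of polycyclic groups are finitely generated: modulo its intersection with
`s (i + 1)`, a subgroup of `s i` is cyclic. -/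
theorem fg_of_le (hs : IsCyclicSeries H n s) : ∀ i ≤ n, ∀ T ≤ s i, T.FG := by
  intro i hi
  induction hi using Nat.decreasingInduction with
  | self =>
    intro T hT
    rw [hs.last, le_bot_iff] at hT
    exact hT ▸ Subgroup.FG.bot
  | of_succ i hi ih =>
    intro T hT
    obtain ⟨hle, Q, _, q, hQ, hq⟩ := hs.step i hi
    obtain ⟨⟨y, hy⟩, hgen⟩ :=
      IsCyclic.exists_generator (α := (T.subgroupOf (s i)).map q)
    obtain ⟨t, ht, rfl⟩ := hy
    replace ht : (t : G) ∈ T := ht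
    have hT' : T = Subgroup.zpowers (t : G) ⊔ (T ⊓ s (i + 1)) := by
      apply le_antisymm
      · intro a ha
        obtain ⟨k, hk⟩ := hgen ⟨q ⟨a, hT ha⟩, ⟨a, hT ha⟩, ha, rfl⟩
        have hk' : q t ^ k = q ⟨a, hT ha⟩ := congrArg Subtype.val hk
        have hmem : (t ^ k)⁻¹ * ⟨a, hT ha⟩ ∈ q.ker := by
          rw [MonoidHom.mem_ker, map_mul, map_inv, map_zpow, hk', inv_mul_cancel]
        rw [hq, Subgroup.mem_subgroupOf] at hmem
        have ht' : (t : G) ^ k ∈ Subgroup.zpowers (t : G) := ⟨k, rfl⟩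
        have hrest : ((t : G) ^ k)⁻¹ * a ∈ T ⊓ s (i + 1) :=
          ⟨T.mul_mem (T.inv_mem (T.zpow_mem ht k)) ha, hmem⟩
        have := Subgroup.mul_mem_sup ht' hrest
        rwa [mul_inv_cancel_left] at this
      · refine sup_le ?_ inf_le_left
        rwa [Subgroup.zpowers_le]
    rw [hT']
    exact Subgroup.FG.sup ⟨{(t : G)}, by simp [Subgroup.zpowers_eq_closure]⟩ (ih _ inf_le_right)

theorem isSolvable (hs : IsCyclicSeries H n s) : Group.IsSolvable H := by
  suffices ∀ i ≤ n, Group.IsSolvable (s i) from hs.zero ▸ this 0 (Nat.zero_le n)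
  intro i hi
  induction hi using Nat.decreasingInduction with
  | self => rw [hs.last]; infer_instance
  | of_succ i hi ih =>
    obtain ⟨hle, Q, _, q, hQ, hq⟩ := hs.step i hi
    let _ : CommGroup Q := IsCyclic.commGroup
    refine Group.isSolvable_of_ker_le_range (Subgroup.inclusion hle) q ?_
    rw [hq, Subgroup.inclusion_range]

end IsCyclicSeries

theorem fg_of_finiteIndex {B : Type*} [Group B] (K : Subgroup B) [K.FiniteIndex] (hK : K.FG) :
    Group.FG B := by
  rw [Group.fg_def]
  have htop : (⊤ : Subgroup B) =
      Subgroup.closure (Set.range (Quotient.out : B ⧸ K → B)) ⊔ K := by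
    symm
    rw [eq_top_iff]
    intro b _
    have : b = (b : B ⧸ K).out * ((b : B ⧸ K).out⁻¹ * b) := by group
    rw [this]
    refine Subgroup.mul_mem_sup (Subgroup.subset_closure ⟨_, rfl⟩) ?_
    rw [← QuotientGroup.eq]
    exact Quotient.out_eq _
  rw [htop]
  have : Finite (B ⧸ K) := inferInstance
  exact Subgroup.FG.sup ((Subgroup.fg_iff _).mpr ⟨_, rfl, Set.finite_range _⟩) hK

theorem IsCyclicSeries.fg {G : Type u} [Group G] {H : Subgroup G} [H.FiniteIndex] {n : ℕ}
    {s : ℕ → Subgroup G} (hs : IsCyclicSeries H n s) (B : Subgroup G) : B.FG := by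
  rw [← Group.fg_iff_subgroup_fg]
  have h1 : (B ⊓ H).FG := hs.fg_of_le 0 (Nat.zero_le n) _ (hs.zero ▸ inf_le_right)
  apply fg_of_finiteIndex (H.subgroupOf B)
  rw [← Group.fg_iff_subgroup_fg] at h1 ⊢
  rw [inf_comm] at h1
  have hm : (H.subgroupOf B).map B.subtype = H ⊓ B := Subgroup.subgroupOf_map_subtype H B
  rw [← hm] at h1
  exact Group.fg_of_surjective (f :=
    ((H.subgroupOf B).equivMapOfInjective B.subtype B.subtype_injective).symm.toMonoidHom)
    (MulEquiv.surjective _)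

theorem IsPositiveCone.subgroup {G : Type*} [Group G] {P : Set G} (hP : IsPositiveCone P)
    (T : Subgroup G) : IsPositiveCone ((↑) ⁻¹' P : Set T) := by
  obtain ⟨hmul, htot, hasymm, hone⟩ := hP
  refine ⟨fun a ha b hb => hmul _ ha _ hb, fun g => ?_, fun g hg => hasymm _ hg, hone⟩
  simpa using htot g

/-- Every nontrivial subgroup of a left-orderable virtually polycyclic group surjects onto `ℤ`. -/
theorem IsCyclicSeries.exists_int_hom {G : Type u} [Group G] (hLO : ∃ P : Set G, IsPositiveCone P)
    {H : Subgroup G} [H.FiniteIndex] {n : ℕ} {s : ℕ → Subgroup G} (hs : IsCyclicSeries H n s)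
    {T : Subgroup G} (hT : T ≠ ⊥) : ∃ ψ : T →* Multiplicative ℤ, Function.Surjective ψ := by
  obtain ⟨P, hP⟩ := hLO
  have : Nontrivial T := (Subgroup.nontrivial_iff_ne_bot T).mpr hT
  have hfg : ∀ B : Subgroup T, B.FG := fun B => by
    have h1 := hs.fg (B.map T.subtype)
    rw [← Group.fg_iff_subgroup_fg] at h1 ⊢
    exact Group.fg_of_surjective (f :=
      (B.equivMapOfInjective T.subtype T.subtype_injective).symm.toMonoidHom)
      (MulEquiv.surjective _)
  have := hs.isSolvable
  have hsol : Group.IsSolvable (H.normalCore.subgroupOf T) := by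
    let f : H.normalCore.subgroupOf T →* H :=
      { toFun := fun g => ⟨g, H.normalCore_le g.2⟩
        map_one' := rfl
        map_mul' := fun _ _ => rfl }
    have hf : Function.Injective f := fun a b hab =>
      Subtype.ext (Subtype.ext (congrArg (fun x : H => (x : G)) hab))
    exact Group.isSolvable_of_isSolvable_injective hf
  have hG : Group.FG T := Group.fg_iff_subgroup_fg T |>.mpr (hs.fg T)
  exact LOPolyZ.exists_int_hom hG
    (exists_real_hom ⟨_, IsPositiveCone.subgroup hP T⟩ hfg (H.normalCore.subgroupOf T) hsol)

/-! ### Termination -/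

universe v

/-- The indices at which the subgroup `T` has infinite image in the corresponding factor of the
series `s`. Its cardinality plays the role of the Hirsch length of `T`. -/
noncomputable def infiniteFactors {G : Type*} [Group G] (n : ℕ) (s : ℕ → Subgroup G)
    (T : Subgroup G) : Finset ℕ :=
  open Classical in {i ∈ Finset.range n | ∃ t ∈ T ⊓ s i, ∀ m : ℕ, 0 < m → t ^ m ∉ s (i + 1)}

theorem mem_infiniteFactors {G : Type*} [Group G] {n : ℕ} {s : ℕ → Subgroup G} {T : Subgroup G}
    {i : ℕ} : i ∈ infiniteFactors n s T ↔
      i < n ∧ ∃ t ∈ T ⊓ s i, ∀ m : ℕ, 0 < m → t ^ m ∉ s (i + 1) := by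
  classical
  rw [infiniteFactors, Finset.mem_filter, Finset.mem_range]

theorem infiniteFactors_mono {G : Type*} [Group G] {n : ℕ} {s : ℕ → Subgroup G}
    {T' T : Subgroup G} (h : T' ≤ T) : infiniteFactors n s T' ⊆ infiniteFactors n s T := by
  intro i hi
  obtain ⟨hin, t, ht, htm⟩ := mem_infiniteFactors.mp hi
  exact mem_infiniteFactors.mpr ⟨hin, t, ⟨h ht.1, ht.2⟩, htm⟩

/-- Passing to a proper isolated subgroup destroys one of the infinite factors. -/
theorem IsCyclicSeries.le_of_isolated {G : Type v} [Group G] {H : Subgroup G} [H.FiniteIndex]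
    {n : ℕ} {s : ℕ → Subgroup G} (hs : IsCyclicSeries H n s) {T' T : Subgroup G}
    (hiso : ∀ t ∈ T, ∀ k : ℤ, k ≠ 0 → t ^ k ∈ T' → t ∈ T')
    (hinf : infiniteFactors n s T ⊆ infiniteFactors n s T') (hle : T' ≤ T) : T ≤ T' := by
  have hiso' : ∀ t ∈ T, ∀ m : ℕ, 0 < m → t ^ m ∈ T' → t ∈ T' := fun t ht m hm h =>
    hiso t ht m (by exact_mod_cast hm.ne') (by simpa using h)
  have key : ∀ i ≤ n, ∀ t ∈ T, t ∈ s i → t ∈ T' := by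
    intro i hi
    induction hi using Nat.decreasingInduction with
    | self =>
      intro t _ ht
      rw [hs.last, Subgroup.mem_bot] at ht
      exact ht ▸ T'.one_mem
    | of_succ i hi ih =>
      intro t htT hts
      by_cases hI : i ∈ infiniteFactors n s T
      · -- in the infinite factor, a nonzero power of `t` agrees with a power of some `t' ∈ T'`
        obtain ⟨-, t', ⟨htT', htS⟩, ht'⟩ := mem_infiniteFactors.mp (hinf hI)
        obtain ⟨_, Q, _, q, ⟨y, hy⟩, hq⟩ := hs.step i hi
        obtain ⟨j, hj⟩ := hy (q ⟨t, hts⟩)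
        obtain ⟨k, hk⟩ := hy (q ⟨t', htS⟩)
        have hk0 : k ≠ 0 := by
          rintro rfl
          have hmem : (⟨t', htS⟩ : s i) ∈ q.ker := by
            rw [MonoidHom.mem_ker, ← hk]
            exact zpow_zero y
          rw [hq, Subgroup.mem_subgroupOf] at hmem
          exact ht' 1 one_pos (by simpa using hmem)
        have hmem : (⟨t', htS⟩ ^ j)⁻¹ * ⟨t, hts⟩ ^ k ∈ q.ker := by
          rw [MonoidHom.mem_ker, map_mul, map_inv, map_zpow, map_zpow, ← hj, ← hk]
          change ((y ^ k) ^ j)⁻¹ * (y ^ j) ^ k = 1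
          rw [← zpow_mul, ← zpow_mul, mul_comm k j, inv_mul_cancel]
        rw [hq, Subgroup.mem_subgroupOf] at hmem
        have hrest : (t' ^ j)⁻¹ * t ^ k ∈ T' :=
          ih _ (T.mul_mem (T.inv_mem (T.zpow_mem (hle htT') j)) (T.zpow_mem htT k)) hmem
        refine hiso t htT k hk0 ?_
        have := T'.mul_mem (T'.zpow_mem htT' j) hrest
        rwa [mul_inv_cancel_left] at this
      · obtain ⟨m, hm, hmem⟩ : ∃ m : ℕ, 0 < m ∧ t ^ m ∈ s (i + 1) := by
          by_contra! hcon
          exact hI (mem_infiniteFactors.mpr ⟨hi, t, ⟨htT, hts⟩, hcon⟩)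
        exact hiso' t htT m hm (ih _ (T.pow_mem htT m) hmem)
  intro t ht
  obtain ⟨m, hm, -, hmem⟩ :=
    H.exists_pow_mem_of_index_ne_zero Subgroup.FiniteIndex.index_ne_zero t
  exact hiso' t ht m hm (key 0 (Nat.zero_le n) _ (T.pow_mem ht m) (hs.zero ▸ hmem))

/-- If every nontrivial subgroup surjects onto `ℤ`, iterating the kernels terminates, because each
kernel is isolated and so has fewer infinite factors. -/
theorem IsCyclicSeries.isPolyZ {G : Type v} [Group G] {H : Subgroup G} [H.FiniteIndex]
    {n : ℕ} {s : ℕ → Subgroup G} (hs : IsCyclicSeries H n s)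
    (hsurj : ∀ T : Subgroup G, T ≠ ⊥ → ∃ ψ : T →* Multiplicative ℤ, Function.Surjective ψ) :
    IsPolyZ G := by
  suffices ∀ (r : ℕ) (T : Subgroup G), (infiniteFactors n s T).card = r →
      ∃ (m : ℕ) (u : ℕ → Subgroup G), u 0 = T ∧ u m = ⊥ ∧ ∀ i < m, u (i + 1) ≤ u i ∧
        ∃ φ : u i →* Multiplicative ℤ, Function.Surjective φ ∧
          φ.ker = (u (i + 1)).subgroupOf (u i) from this _ ⊤ rfl
  intro r
  induction r using Nat.strong_induction_on with
  | _ r ih =>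
    intro T hT
    by_cases hbot : T = ⊥
    · exact ⟨0, fun _ => T, rfl, hbot, fun i hi => absurd hi (Nat.not_lt_zero i)⟩
    obtain ⟨ψ, hψ⟩ := hsurj T hbot
    let T' := ψ.ker.map T.subtype
    have hle : T' ≤ T := Subgroup.map_subtype_le _
    have hmem : ∀ t : T, (t : G) ∈ T' ↔ ψ t = 1 := fun t =>
      Subgroup.mem_map_iff_mem T.subtype_injective
    have hlt : (infiniteFactors n s T').card < r := by
      rw [← hT]
      refine Finset.card_lt_card ⟨infiniteFactors_mono hle, fun hsub => ?_⟩
      have hTT' : T ≤ T' := by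
        refine hs.le_of_isolated (fun t ht k hk h => ?_) hsub hle
        rw [hmem ⟨t, ht⟩]
        have h1 := (hmem (⟨t, ht⟩ ^ k)).mp h
        rw [map_zpow] at h1
        have h2 : k * (ψ ⟨t, ht⟩).toAdd = 0 := by
          simpa using congrArg Multiplicative.toAdd h1
        exact Multiplicative.toAdd.injective ((mul_eq_zero.mp h2).resolve_left hk)
      obtain ⟨t, ht⟩ := hψ (Multiplicative.ofAdd 1)
      have := (hmem t).mp (hTT' t.2)
      rw [ht] at this
      exact absurd (congrArg Multiplicative.toAdd this) one_ne_zero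
    obtain ⟨m, u, hu0, hum, hu⟩ := ih _ hlt T' rfl
    refine ⟨m + 1, fun i => Nat.casesOn i T u, rfl, hum, fun i hi => ?_⟩
    cases i with
    | zero =>
      refine ⟨hu0.trans_le hle, ψ, hψ, ?_⟩
      ext t
      change _ ↔ t ∈ (u 0).subgroupOf T
      rw [hu0, Subgroup.mem_subgroupOf, hmem, MonoidHom.mem_ker]
    | succ i => exact hu i (Nat.lt_of_succ_lt_succ hi)

/-! ### Regular positive cones of poly-`ℤ` groups -/

/-- A poly-`ℤ` series `s` of length `n` on `G`, in coordinates: `ψ i` restricts to a surjection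
`s i → ℤ` with kernel `s (i + 1)`, and `t i ∈ s i` is sent to `1`. The values of `ψ i` outside
`s i` are irrelevant. -/
structure IsCoordinates {G : Type*} [Group G] (n : ℕ) (s : ℕ → Subgroup G) (ψ : ℕ → G → ℤ)
    (t : ℕ → G) : Prop where
  zero : s 0 = ⊤
  last : s n = ⊥
  le : ∀ i < n, s (i + 1) ≤ s i
  map_mul : ∀ i < n, ∀ a ∈ s i, ∀ b ∈ s i, ψ i (a * b) = ψ i a + ψ i b
  ker : ∀ i < n, ∀ a ∈ s i, (ψ i a = 0 ↔ a ∈ s (i + 1))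
  mem : ∀ i < n, t i ∈ s i
  map_t : ∀ i < n, ψ i (t i) = 1

theorem exists_isCoordinates {G : Type*} [Group G] (hG : IsPolyZ G) :
    ∃ n s, ∃ (ψ : ℕ → G → ℤ) (t : ℕ → G), IsCoordinates n s ψ t := by
  classical
  obtain ⟨n, s, h0, hn, hs⟩ := hG
  choose hle φ hφ hker using hs
  choose x hx using fun i hi => hφ i hi (Multiplicative.ofAdd 1)
  refine ⟨n, s, fun i a => if h : ∃ hi : i < n, a ∈ s i then (φ i h.1 ⟨a, h.2⟩).toAdd else 0,
    fun i => if hi : i < n then x i hi else 1, h0, hn, hle, ?_, ?_, ?_, ?_⟩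
  · intro i hi a ha b hb
    rw [dif_pos ⟨hi, mul_mem ha hb⟩, dif_pos ⟨hi, ha⟩, dif_pos ⟨hi, hb⟩, ← toAdd_mul, ← map_mul]
    rfl
  · intro i hi a ha
    rw [dif_pos ⟨hi, ha⟩, toAdd_eq_zero, ← MonoidHom.mem_ker, hker, Subgroup.mem_subgroupOf]
  · intro i hi
    rw [dif_pos hi]
    exact (x i hi).2
  · intro i hi
    have : (x i hi : G) ∈ s i := (x i hi).2
    simp [hi, hx]

namespace IsCoordinates

variable {G : Type*} [Group G] {n : ℕ} {s : ℕ → Subgroup G} {ψ : ℕ → G → ℤ} {t : ℕ → G}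

theorem anti (h : IsCoordinates n s ψ t) {i j : ℕ} (hij : i ≤ j) (hj : j ≤ n) : s j ≤ s i := by
  induction j, hij using Nat.le_induction with
  | base => exact le_rfl
  | succ j hij ih => exact (h.le j hj).trans (ih (Nat.le_of_succ_le hj))

theorem map_one (h : IsCoordinates n s ψ t) {i : ℕ} (hi : i < n) : ψ i 1 = 0 :=
  (h.ker i hi 1 (one_mem _)).mpr (one_mem _)

theorem map_inv (h : IsCoordinates n s ψ t) {i : ℕ} (hi : i < n) {a : G} (ha : a ∈ s i) :
    ψ i a⁻¹ = -ψ i a := by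
  have := h.map_mul i hi a⁻¹ (inv_mem ha) a ha
  rw [inv_mul_cancel, h.map_one hi] at this
  lia

theorem map_pow (h : IsCoordinates n s ψ t) {i : ℕ} (hi : i < n) {a : G} (ha : a ∈ s i) (k : ℕ) :
    ψ i (a ^ k) = k * ψ i a := by
  induction k with
  | zero => simp [h.map_one hi]
  | succ k ih =>
    rw [pow_succ, h.map_mul i hi _ (pow_mem ha k) a ha, ih]
    push_cast
    ring

theorem exists_level (h : IsCoordinates n s ψ t) {g : G} (hg : g ≠ 1) :
    ∃ i < n, g ∈ s i ∧ ψ i g ≠ 0 := by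
  by_contra! hcon
  have : ∀ i ≤ n, g ∈ s i := by
    intro i hi
    induction i with
    | zero => exact h.zero ▸ Subgroup.mem_top g
    | succ i ih =>
      have hgi := ih (Nat.le_of_succ_le hi)
      exact (h.ker i hi g hgi).mp (hcon i hi hgi)
  exact hg (Subgroup.mem_bot.mp (h.last ▸ this n le_rfl))

/-- The lexicographic cone: elements whose first nonzero coordinate is positive. -/
def cone (n : ℕ) (s : ℕ → Subgroup G) (ψ : ℕ → G → ℤ) : Set G :=
  {g | ∃ i < n, g ∈ s i ∧ 0 < ψ i g}

theorem eq_zero_of_lt (h : IsCoordinates n s ψ t) {i j : ℕ} (hij : i < j) (hj : j ≤ n) {g : G}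
    (hg : g ∈ s j) : ψ i g = 0 :=
  (h.ker i (by lia) g (h.anti hij.le hj hg)).mpr (h.anti hij hj hg)

theorem isPositiveCone (h : IsCoordinates n s ψ t) : IsPositiveCone (cone n s ψ) := by
  have hasymm : ∀ g ∈ cone n s ψ, g⁻¹ ∉ cone n s ψ := by
    rintro g ⟨i, hi, hgi, hpos⟩ ⟨j, hj, hgj, hneg⟩
    have hgj' : g ∈ s j := by simpa using hgj
    rw [h.map_inv hj hgj'] at hneg
    rcases lt_trichotomy i j with hij | rfl | hij
    · exact hpos.ne' (h.eq_zero_of_lt hij hj.le hgj')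
    · lia
    · have := h.eq_zero_of_lt hij hi.le hgi
      lia
  refine ⟨?_, ?_, hasymm, fun h1 => hasymm 1 h1 (by simpa using h1)⟩
  · rintro a ⟨i, hi, hai, hapos⟩ b ⟨j, hj, hbj, hbpos⟩
    rcases lt_trichotomy i j with hij | rfl | hij
    · have hb := h.anti hij.le hj.le hbj
      refine ⟨i, hi, mul_mem hai hb, ?_⟩
      rwa [h.map_mul i hi a hai b hb, h.eq_zero_of_lt hij hj.le hbj, add_zero]
    · refine ⟨i, hi, mul_mem hai hbj, ?_⟩
      rw [h.map_mul i hi a hai b hbj]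
      exact add_pos hapos hbpos
    · have ha := h.anti hij.le hi.le hai
      refine ⟨j, hj, mul_mem ha hbj, ?_⟩
      rwa [h.map_mul j hj a ha b hbj, h.eq_zero_of_lt hij hi.le hai, zero_add]
  · intro g
    by_cases hg : g = 1
    · exact Or.inr (Or.inr hg)
    obtain ⟨i, hi, hgi, hne⟩ := h.exists_level hg
    rcases hne.lt_or_gt with hlt | hgt
    · refine Or.inr (Or.inl ⟨i, hi, inv_mem hgi, ?_⟩)
      rw [h.map_inv hi hgi]
      lia
    · exact Or.inl ⟨i, hi, hgi, hgt⟩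

/-- The letters: `(i, true)` stands for `t i` and `(i, false)` for its inverse. -/
def letter (t : ℕ → G) (x : Fin n × Bool) : G := if x.2 then t x.1 else (t x.1)⁻¹

/-- Every element of `s i` is spelled by letters of index at least `i`. -/
theorem exists_word (h : IsCoordinates n s ψ t) {i : ℕ} (hi : i ≤ n) : ∀ g ∈ s i,
    ∃ w : List (Fin n × Bool), (∀ x ∈ w, i ≤ x.1) ∧ (w.map (letter t)).prod = g := by
  induction hi using Nat.decreasingInduction with
  | self =>
    intro g hg
    rw [h.last, Subgroup.mem_bot] at hg
    exact ⟨[], by simp, by simp [hg]⟩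
  | of_succ i hi ih =>
    intro g hg
    -- the first coordinate of `g` is removed by a power of `t i` or of its inverse
    obtain ⟨b, k, hk⟩ : ∃ (b : Bool) (k : ℕ),
        ψ i (letter t ((⟨i, hi⟩, b) : Fin n × Bool) ^ k) = ψ i g := by
      obtain ⟨k, hk | hk⟩ := (ψ i g).eq_nat_or_neg
      · exact ⟨true, k, by simp [letter, h.map_pow hi (h.mem i hi), h.map_t i hi, hk]⟩
      · refine ⟨false, k, ?_⟩
        have hinv := h.map_pow hi (inv_mem (h.mem i hi)) k
        rw [h.map_inv hi (h.mem i hi), h.map_t i hi, mul_neg_one] at hinv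
        rw [hk, ← hinv]
        rfl
    set c := letter t ((⟨i, hi⟩, b) : Fin n × Bool) with hc
    have hcs : c ∈ s i := by
      cases b
      · simpa [hc, letter] using h.mem i hi
      · simpa [hc, letter] using h.mem i hi
    have hrest : (c ^ k)⁻¹ * g ∈ s (i + 1) := by
      have hck := pow_mem hcs k
      rw [← h.ker i hi _ (mul_mem (inv_mem hck) hg), h.map_mul i hi _ (inv_mem hck) _ hg,
        h.map_inv hi hck, hk, neg_add_cancel]
    obtain ⟨w, hw, hprod⟩ := ih _ hrest
    refine ⟨List.replicate k (⟨i, hi⟩, b) ++ w, fun x hx => ?_, ?_⟩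
    · rcases List.mem_append.mp hx with hx | hx
      · rw [List.eq_of_mem_replicate hx]
      · exact Nat.le_of_succ_le (hw x hx)
    · rw [List.map_append, List.prod_append, hprod, List.map_replicate, List.prod_replicate,
        mul_inv_cancel_left]

end IsCoordinates

/-- Once the word has started with `(i, true)`, the letter `x` may follow: it is `(i, true)` again,
or a letter of larger index. -/
def Allowed {n : ℕ} (i : Fin n) (x : Fin n × Bool) : Prop := i < x.1 ∨ x = (i, true)

instance {n : ℕ} (i : Fin n) (x : Fin n × Bool) : Decidable (Allowed i x) :=
  inferInstanceAs (Decidable (_ ∨ _))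

/-- The automaton for the words `(i, true) x₁ ⋯ xₖ` with all `xⱼ` allowed after `(i, true)`. The
state `none` is initial, `some none` is a fail state, and `some (some i)`, reached by the first
letter `(i, true)`, is accepting. -/
def coneDFA (n : ℕ) : DFA (Fin n × Bool) (Option (Option (Fin n))) where
  step
    | none, x => if x.2 then some (some x.1) else some none
    | some none, _ => some none
    | some (some i), x => if Allowed i x then some (some i) else some none
  start := none
  accept := {q | ∃ i, q = some (some i)}

theorem coneDFA_evalFrom_fail {n : ℕ} (w : List (Fin n × Bool)) :
    (coneDFA n).evalFrom (some none) w = some none := by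
  induction w with
  | nil => rfl
  | cons x w ih => exact ih

theorem coneDFA_evalFrom {n : ℕ} (i : Fin n) (w : List (Fin n × Bool)) :
    (coneDFA n).evalFrom (some (some i)) w ∈ (coneDFA n).accept ↔ ∀ x ∈ w, Allowed i x := by
  induction w with
  | nil => exact iff_of_true ⟨i, rfl⟩ (by simp)
  | cons x w ih =>
    rw [DFA.evalFrom_cons, List.forall_mem_cons]
    by_cases hx : Allowed i x
    · have : (coneDFA n).step (some (some i)) x = some (some i) := if_pos hx
      rw [this, ih]
      exact (and_iff_right hx).symm
    · have : (coneDFA n).step (some (some i)) x = some none := if_neg hx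
      rw [this, coneDFA_evalFrom_fail]
      exact iff_of_false (fun ⟨j, hj⟩ => by simp at hj) (fun hh => hx hh.1)

theorem mem_coneDFA_accepts {n : ℕ} (w : List (Fin n × Bool)) :
    w ∈ (coneDFA n).accepts ↔ ∃ i w', w = (i, true) :: w' ∧ ∀ x ∈ w', Allowed i x := by
  rw [DFA.mem_accepts, DFA.eval]
  cases w with
  | nil => exact iff_of_false (fun ⟨j, hj⟩ => by cases hj) (by simp)
  | cons x w =>
    obtain ⟨j, b⟩ := x
    rw [DFA.evalFrom_cons]
    cases b with
    | false =>
      have : (coneDFA n).step (coneDFA n).start (j, false) = some none := rfl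
      rw [this, coneDFA_evalFrom_fail]
      exact iff_of_false (fun ⟨j, hj⟩ => by simp at hj) (by simp)
    | true =>
      have : (coneDFA n).step (coneDFA n).start (j, true) = some (some j) := rfl
      rw [this, coneDFA_evalFrom]
      constructor
      · exact fun hw => ⟨j, w, rfl, hw⟩
      · rintro ⟨i, w', heq, hw⟩
        obtain ⟨hij, rfl⟩ := List.cons.inj heq
        obtain rfl := (Prod.mk.inj hij).1
        exact hw

namespace IsCoordinates

variable {G : Type*} [Group G] {n : ℕ} {s : ℕ → Subgroup G} {ψ : ℕ → G → ℤ} {t : ℕ → G}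

/-- Letters allowed after `(i, true)` evaluate into `s i` and never lower the `i`-th coordinate. -/
theorem prod_allowed (h : IsCoordinates n s ψ t) (i : Fin n) (w : List (Fin n × Bool))
    (hw : ∀ x ∈ w, Allowed i x) :
    (w.map (letter t)).prod ∈ s i ∧ 0 ≤ ψ i (w.map (letter t)).prod := by
  induction w with
  | nil => simp [one_mem, h.map_one i.2]
  | cons x w ih =>
    obtain ⟨hx, hw⟩ := List.forall_mem_cons.mp hw
    obtain ⟨hmem, hnonneg⟩ := ih hw
    rw [List.map_cons, List.prod_cons]
    have hxs : letter t x ∈ s i ∧ 0 ≤ ψ i (letter t x) := by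
      rcases hx with hx | rfl
      · have : letter t x ∈ s x.1 := by
          have := h.mem x.1 x.1.2
          unfold letter
          split_ifs
          exacts [this, inv_mem this]
        exact ⟨h.anti hx.le x.1.2.le this, (h.eq_zero_of_lt hx x.1.2.le this).ge⟩
      · exact ⟨h.mem i i.2, (h.map_t i i.2).symm ▸ zero_le_one⟩
    refine ⟨mul_mem hxs.1 hmem, ?_⟩
    rw [h.map_mul i i.2 _ hxs.1 _ hmem]
    exact add_nonneg hxs.2 hnonneg

theorem hasRegularConeEval (h : IsCoordinates n s ψ t) : HasRegularConeEval (cone n s ψ) := by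
  have hπ : ∀ w : List (Fin n × Bool),
      FreeMonoid.lift (letter t) (FreeMonoid.ofList w) = (w.map (letter t)).prod := fun w =>
    FreeMonoid.lift_apply _ _
  refine ⟨Fin n × Bool, inferInstance, FreeMonoid.lift (letter t), fun g => ?_,
    (coneDFA n).accepts, ⟨_, inferInstance, coneDFA n, rfl⟩, ?_⟩
  · obtain ⟨w, -, hw⟩ := h.exists_word (Nat.zero_le n) g (h.zero ▸ Subgroup.mem_top g)
    exact ⟨FreeMonoid.ofList w, (hπ w).trans hw⟩
  · ext g
    constructor
    · rintro ⟨w, hw, rfl⟩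
      obtain ⟨i, w, rfl, hw'⟩ := (mem_coneDFA_accepts w).mp hw
      obtain ⟨hmem, hnonneg⟩ := h.prod_allowed i w hw'
      have ht := h.mem i i.2
      have hlet : letter t (i, true) = t i := rfl
      beta_reduce
      rw [hπ, List.map_cons, List.prod_cons, hlet]
      refine ⟨i, i.2, mul_mem ht hmem, ?_⟩
      rw [h.map_mul i i.2 _ ht _ hmem, h.map_t i i.2]
      lia
    · rintro ⟨i, hi, hg, hpos⟩
      -- `g` is `t i ^ (k + 1)` times an element of `s (i + 1)`
      obtain ⟨k, hk⟩ : ∃ k : ℕ, ψ i g = k + 1 := ⟨(ψ i g - 1).toNat, by lia⟩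
      have htk := pow_mem (h.mem i hi) (k + 1)
      have hrest : (t i ^ (k + 1))⁻¹ * g ∈ s (i + 1) := by
        rw [← h.ker i hi _ (mul_mem (inv_mem htk) hg), h.map_mul i hi _ (inv_mem htk) _ hg,
          h.map_inv hi htk, h.map_pow hi (h.mem i hi), h.map_t i hi, hk]
        push_cast
        ring
      obtain ⟨w, hw, hprod⟩ := h.exists_word hi _ hrest
      refine ⟨(⟨i, hi⟩, true) :: (List.replicate k (⟨i, hi⟩, true) ++ w),
        (mem_coneDFA_accepts _).mpr ⟨_, _, rfl, fun x hx => ?_⟩, ?_⟩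
      · rcases List.mem_append.mp hx with hx | hx
        · exact Or.inr (List.eq_of_mem_replicate hx)
        · exact Or.inl (hw x hx)
      · have hlet : letter t ((⟨i, hi⟩, true) : Fin n × Bool) = t i := rfl
        beta_reduce
        rw [hπ, List.map_cons, List.prod_cons, List.map_append, List.prod_append, hprod,
          List.map_replicate, List.prod_replicate, hlet, ← mul_assoc, ← pow_succ',
          mul_inv_cancel_left]

end IsCoordinates

end LOPolyZ

/-- Every left-orderable virtually polycyclic group is poly-ℤ; in particular it
admits a regular positive cone. -/
theorem stmt6 {G : Type*} [Group G] (hLO : ∃ P : Set G, IsPositiveCone P)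
    (hvp : ∃ H : Subgroup G, H.index ≠ 0 ∧ IsPolycyclic ↥H) :
    IsPolyZ G ∧ ∃ P : Set G, IsPositiveCone P ∧ HasRegularConeEval P := by
  obtain ⟨H, hindex, hH⟩ := hvp
  have : H.FiniteIndex := ⟨hindex⟩
  obtain ⟨_, _, hs⟩ := LOPolyZ.exists_isCyclicSeries hH
  have hG : IsPolyZ G := hs.isPolyZ fun T hT => hs.exists_int_hom hLO hT
  obtain ⟨_, _, _, _, h⟩ := LOPolyZ.exists_isCoordinates hG
  exact ⟨hG, _, h.isPositiveCone, h.hasRegularConeEval⟩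
end

section
/- Let L ⊆ {t, t⁻¹}* be a regular language such that every word w ∈ L satisfies #_t(w) − #_{t⁻¹}(w) ≥ 0. Then there exists a constant K ≥ 0 such that for every w ∈ L and all indices 0 ≤ i < j ≤ |w|, one has f_w(j) > f_w(i) − K, where f_w(i) = #_t(w_i) − #_{t⁻¹}(w_i) and w_i denotes the prefix of w of length i. -/
/-!
Fix a finite automaton for `L`. If `u ++ x ++ v ∈ L`, where `u` leads from the start to the state
`p` and `x` leads from `p` to `q`, then `u` may be replaced by any fixed word `α` reaching `p`, and
`v` by any fixed word `β` accepted from `q`, without leaving `L`. So `h(α) + h(x) + h(β) ≥ 0`, where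
`h` is the exponent sum, and `h(x)` is bounded below in terms of the pair `(p, q)` alone. As there
are finitely many such pairs, one constant serves for all of them; the claim is this bound for the
factor `x` of `w` between the positions `i` and `j`.
-/

/-- The exponent sum `#_t(w) − #_{t⁻¹}(w)` of a word. -/
def expSum (w : List Bool) : ℤ := (w.count true : ℤ) - (w.count false : ℤ)

lemma expSum_append (u v : List Bool) : expSum (u ++ v) = expSum u + expSum v := by
  simp only [expSum, List.count_append]
  push_cast
  ring

/-- For fixed states `p` and `q`, the labels of paths from `p` to `q` have exponent sums bounded
below, as soon as `p` is reachable and some word is accepted from `q`. -/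
lemma exists_bound_of_states {σ : Type*} (M : DFA Bool σ)
    (hpos : ∀ w ∈ M.accepts, 0 ≤ expSum w) (p q : σ) :
    ∃ K : ℕ, ∀ u x v : List Bool, M.eval u = p → M.evalFrom p x = q →
      M.evalFrom q v ∈ M.accept → -(K : ℤ) < expSum x := by
  by_cases h : ∃ α β : List Bool, M.eval α = p ∧ M.evalFrom q β ∈ M.accept
  · obtain ⟨α, β, hα, hβ⟩ := h
    refine ⟨(expSum α + expSum β + 1).toNat, fun u x v _ hx _ => ?_⟩
    have hmem : α ++ x ++ β ∈ M.accepts := by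
      rw [DFA.mem_accepts, DFA.eval, DFA.evalFrom_of_append, DFA.evalFrom_of_append]
      rw [DFA.eval] at hα
      rwa [hα, hx]
    have := hpos _ hmem
    rw [expSum_append, expSum_append] at this
    have := Int.self_le_toNat (expSum α + expSum β + 1)
    linarith
  · exact ⟨0, fun u x v hu _ hv => absurd ⟨u, v, hu, hv⟩ h⟩

/-- Let `L` be a regular language over the two-letter alphabet `{t, t⁻¹}` (here `Bool`,
with `true` playing the role of `t` and `false` that of `t⁻¹`) such that every `w ∈ L`
satisfies `#_t(w) − #_{t⁻¹}(w) ≥ 0`. Then there is a constant `K ≥ 0` such that for all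
`w ∈ L` and all `0 ≤ i < j ≤ |w|` one has `f_w(j) > f_w(i) − K`, where
`f_w(i) = #_t(w_i) − #_{t⁻¹}(w_i)` and `w_i` is the prefix of `w` of length `i`. -/
theorem stmt7 (L : Language Bool) (hL : L.IsRegular)
    (hpos : ∀ w ∈ L, (0 : ℤ) ≤ (w.count true : ℤ) - (w.count false : ℤ)) :
    ∃ K : ℕ, ∀ w ∈ L, ∀ i j : ℕ, i < j → j ≤ w.length →
      ((w.take j).count true : ℤ) - ((w.take j).count false : ℤ) >
        ((w.take i).count true : ℤ) - ((w.take i).count false : ℤ) - (K : ℤ) := by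
  obtain ⟨σ, _, M, rfl⟩ := hL
  choose B hB using exists_bound_of_states M hpos
  refine ⟨∑ s : σ × σ, B s.1 s.2, fun w hw i j hij _ => ?_⟩
  have hj : w.take j = w.take i ++ (w.drop i).take (j - i) := by
    rw [← List.take_add, Nat.add_sub_cancel' hij.le]
  have hx := hB (M.eval (w.take i)) (M.eval (w.take j)) (w.take i) ((w.drop i).take (j - i))
    (w.drop j) rfl
    (by rw [hj, DFA.eval, DFA.evalFrom_of_append])
    (by
      rw [DFA.eval, ← DFA.evalFrom_of_append, List.take_append_drop]
      exact hw)
  have hle : B (M.eval (w.take i)) (M.eval (w.take j)) ≤ ∑ s : σ × σ, B s.1 s.2 :=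
    Finset.single_le_sum (f := fun s : σ × σ => B s.1 s.2) (fun _ _ => Nat.zero_le _)
      (Finset.mem_univ (M.eval (w.take i), M.eval (w.take j)))
  have hsum := congrArg expSum hj
  rw [expSum_append] at hsum
  change expSum (w.take j) > expSum (w.take i) - _
  zify at hle
  push_cast
  linarith
end

section
/- Let G = H ⋊ ℤ be a finitely generated group with finite generating set (X, π), let f : G → ℤ be the projection with kernel H, and suppose H is finitely generated. Let P = f⁻¹(ℤ_{>0}) ∪ P_H be a lexicographic positive cone led by ℤ, where P_H is a positive cone of H, and let L ⊆ X* be a regular language with π(L) = P. Then H is language-convex with respect to L: there exists R ≥ 0 such that for every w ∈ L with π(w) ∈ H, every prefix u of w satisfies dist_X(π(u), H) ≤ R. In particular, P_H is a regular positive cone of H with respect to some finite generating set of H. -/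
section

variable {G : Type*} [Group G] {X Q : Type} (f : G →* Multiplicative ℤ)
  (s : Multiplicative ℤ →* G) (π : FreeMonoid X →* G) (M : DFA X Q) (k : Q → Multiplicative ℤ)

/-- Height-zero completions of two prefixes that reach the same state are interchangeable. -/
lemma height_exchange
    (hnn : ∀ w ∈ M.accepts, 0 ≤ Multiplicative.toAdd (f (π (FreeMonoid.ofList w))))
    {x z x' z' : List X}
    (h1 : x ++ z ∈ M.accepts) (h2 : f (π (FreeMonoid.ofList (x ++ z))) = 1)
    (h1' : x' ++ z' ∈ M.accepts) (h2' : f (π (FreeMonoid.ofList (x' ++ z'))) = 1)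
    (he : M.eval x = M.eval x') : f (π (FreeMonoid.ofList (x ++ z'))) = 1 := by
  have e1 : x ++ z' ∈ M.accepts := by
    simp only [DFA.mem_accepts, DFA.eval, DFA.evalFrom_of_append] at h1' he ⊢
    rwa [he]
  have e2 : x' ++ z ∈ M.accepts := by
    simp only [DFA.mem_accepts, DFA.eval, DFA.evalFrom_of_append] at h1 he ⊢
    rwa [← he]
  have n1 := hnn _ e1
  have n2 := hnn _ e2
  have t := congrArg Multiplicative.toAdd h2
  have t' := congrArg Multiplicative.toAdd h2'
  apply Multiplicative.toAdd.injective
  simp only [FreeMonoid.ofList_append, map_mul, toAdd_mul, toAdd_one] at *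
  omega

/-- The height of a prefix of a height-zero accepted word is a function of the state it reaches.
States met by no such prefix receive the value `1`. -/
lemma exists_stateHeight
    (hnn : ∀ w ∈ M.accepts, 0 ≤ Multiplicative.toAdd (f (π (FreeMonoid.ofList w)))) :
    ∃ k : Q → Multiplicative ℤ, k M.start = 1 ∧ ∀ x z : List X, x ++ z ∈ M.accepts →
      f (π (FreeMonoid.ofList (x ++ z))) = 1 → k (M.eval x) = f (π (FreeMonoid.ofList x)) := by
  have key : ∀ q : Q, ∃ c : Multiplicative ℤ, (q = M.start → c = 1) ∧
      ∀ x z : List X, M.eval x = q → x ++ z ∈ M.accepts →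
      f (π (FreeMonoid.ofList (x ++ z))) = 1 → c = f (π (FreeMonoid.ofList x)) := by
    intro q
    by_cases hq : ∃ x z : List X, M.eval x = q ∧ x ++ z ∈ M.accepts ∧
      f (π (FreeMonoid.ofList (x ++ z))) = 1
    · obtain ⟨x, z, hx, h1, h2⟩ := hq
      have main : ∀ x' z' : List X, M.eval x' = q → x' ++ z' ∈ M.accepts →
          f (π (FreeMonoid.ofList (x' ++ z'))) = 1 →
          f (π (FreeMonoid.ofList x)) = f (π (FreeMonoid.ofList x')) := by
        intro x' z' hx' h1' h2'
        have := height_exchange f π M hnn h1 h2 h1' h2' (hx.trans hx'.symm)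
        simp only [FreeMonoid.ofList_append, map_mul] at this h2'
        exact mul_right_cancel (this.trans h2'.symm)
      refine ⟨f (π (FreeMonoid.ofList x)), ?_, main⟩
      rintro rfl
      -- The empty prefix of `x ++ z` also reaches the start state.
      simpa using main [] (x ++ z) (by simp) h1 h2
    · refine ⟨1, fun _ => rfl, fun x z hx h1 h2 => (hq ⟨x, z, hx, h1, h2⟩).elim⟩
  choose k hk using key
  exact ⟨k, (hk _).1 rfl, fun x z => (hk _).2 x z rfl⟩

/-- The contribution to `G` of reading the letter `a` at the state `q`, corrected on both sides by
the section `s` so as to have height zero when the state heights `k` are consistent along the edge. -/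
def edge (q : Q) (a : X) : G := s (k q) * π (FreeMonoid.of a) * (s (k (M.step q a)))⁻¹

open Classical in
/-- The letters are the edges `(q, a)` of the automaton and their formal inverses. Edges whose
`edge` element is not in the kernel are sent to the junk value `1`. -/
noncomputable def letterVal : (Q × X) ⊕ (Q × X) → f.ker
  | .inl p => if h : edge s π M k p.1 p.2 ∈ f.ker then ⟨_, h⟩ else 1
  | .inr p => (if h : edge s π M k p.1 p.2 ∈ f.ker then ⟨_, h⟩ else 1)⁻¹

/-- Evaluation of words in edges and inverse edges. -/
noncomputable def pathHom : FreeMonoid ((Q × X) ⊕ (Q × X)) →* f.ker :=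
  FreeMonoid.lift (letterVal f s π M k)

open Classical in
/-- The automaton accepting the words of edges that form a path of `M` from the start to an accept
state of height zero, using only edges with value in the kernel. The state `none` is a sink. -/
noncomputable def pathDFA : DFA ((Q × X) ⊕ (Q × X)) (Option Q) where
  step o y := match o, y with
    | some q, .inl p =>
      if p.1 = q ∧ edge s π M k p.1 p.2 ∈ f.ker then some (M.step p.1 p.2) else none
    | _, _ => none
  start := some M.start
  accept := {o | ∃ q, o = some q ∧ q ∈ M.accept ∧ k q = 1}

lemma pathDFA_none (y : List ((Q × X) ⊕ (Q × X))) :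
    (pathDFA f s π M k).evalFrom none y = none := by
  induction y with
  | nil => rfl
  | cons c y ih => simpa [DFA.evalFrom, pathDFA] using ih

/-- The value of a path of edges telescopes to that of the word of `X` it spells. -/
lemma path_sound (y : List ((Q × X) ⊕ (Q × X))) (q q' : Q)
    (h : (pathDFA f s π M k).evalFrom (some q) y = some q') :
    ∃ w : List X, M.evalFrom q w = q' ∧
      (pathHom f s π M k (FreeMonoid.ofList y) : G) =
        s (k q) * π (FreeMonoid.ofList w) * (s (k q'))⁻¹ := by
  induction y generalizing q with
  | nil =>
    obtain rfl : q = q' := by simpa using h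
    exact ⟨[], by simp, by simp⟩
  | cons c y ih =>
    rw [DFA.evalFrom_cons] at h
    rcases c with ⟨r, a⟩ | p
    · by_cases hc : r = q ∧ edge s π M k r a ∈ f.ker
      · have hstep : (pathDFA f s π M k).step (some q) (.inl (r, a)) = some (M.step r a) := by
          simp only [pathDFA]
          rw [if_pos hc]
        rw [hstep] at h
        obtain ⟨rfl, hc⟩ := hc
        obtain ⟨w, hw, hv⟩ := ih _ h
        refine ⟨a :: w, by rw [DFA.evalFrom_cons, hw], ?_⟩
        rw [FreeMonoid.ofList_cons, map_mul, Subgroup.coe_mul, hv, FreeMonoid.ofList_cons, map_mul]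
        simp only [pathHom, FreeMonoid.lift_eval_of, letterVal, dif_pos hc]
        simp only [edge]
        group
      · have hstep : (pathDFA f s π M k).step (some q) (.inl (r, a)) = none := by
          simp only [pathDFA]
          rw [if_neg hc]
        rw [hstep, pathDFA_none] at h
        cases h
    · have hstep : (pathDFA f s π M k).step (some q) (.inr p) = none := rfl
      rw [hstep, pathDFA_none] at h
      cases h

/-- Every height-zero accepted word is spelled by a path of edges; the induction is on the suffix
`z` still to be read, `x` being the prefix already read. -/
lemma path_complete (hs : ∀ z, f (s z) = z)
    (hk : ∀ x z : List X, x ++ z ∈ M.accepts →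
      f (π (FreeMonoid.ofList (x ++ z))) = 1 → k (M.eval x) = f (π (FreeMonoid.ofList x)))
    (z x : List X) (h1 : x ++ z ∈ M.accepts) (h2 : f (π (FreeMonoid.ofList (x ++ z))) = 1) :
    ∃ y, (pathDFA f s π M k).evalFrom (some (M.eval x)) y = some (M.eval (x ++ z)) ∧
      (pathHom f s π M k (FreeMonoid.ofList y) : G) =
        s (k (M.eval x)) * π (FreeMonoid.ofList z) * (s (k (M.eval (x ++ z))))⁻¹ := by
  induction z generalizing x with
  | nil => exact ⟨[], by simp, by simp⟩
  | cons a z ih =>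
    have k1 := hk _ _ h1 h2
    have hxa : x ++ a :: z = (x ++ [a]) ++ z := by simp
    rw [hxa] at h1 h2 ⊢
    have k2 := hk _ _ h1 h2
    obtain ⟨y, hy, hv⟩ := ih _ h1 h2
    have hev : M.eval (x ++ [a]) = M.step (M.eval x) a := M.eval_append_singleton x a
    rw [hev] at k2 hy hv
    have hc : edge s π M k (M.eval x) a ∈ f.ker := by
      rw [MonoidHom.mem_ker, edge]
      simp only [map_mul, map_inv, hs, k1, k2, FreeMonoid.ofList_append, FreeMonoid.ofList_singleton]
      group
    have hstep : (pathDFA f s π M k).step (some (M.eval x)) (.inl (M.eval x, a)) =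
        some (M.step (M.eval x) a) := by
      simp only [pathDFA]
      rw [if_pos ⟨trivial, hc⟩]
    refine ⟨.inl (M.eval x, a) :: y, by rw [DFA.evalFrom_cons, hstep, hy], ?_⟩
    rw [FreeMonoid.ofList_cons, map_mul, Subgroup.coe_mul, hv, FreeMonoid.ofList_cons, map_mul]
    simp only [pathHom, FreeMonoid.lift_eval_of, letterVal, dif_pos hc]
    simp only [edge]
    group

/-- The formal inverses among the letters make the image of `pathHom` a subgroup. -/
lemma exists_pathHom_inv (u : FreeMonoid ((Q × X) ⊕ (Q × X))) :
    ∃ v, pathHom f s π M k v = (pathHom f s π M k u)⁻¹ := by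
  induction u using FreeMonoid.inductionOn' with
  | one => exact ⟨1, by simp⟩
  | of_mul c u ih =>
    obtain ⟨v, hv⟩ := ih
    rcases c with p | p
    · refine ⟨v * FreeMonoid.of (.inr p), ?_⟩
      rw [map_mul, map_mul, hv, mul_inv_rev, mul_right_inj]
      rfl
    · refine ⟨v * FreeMonoid.of (.inl p), ?_⟩
      rw [map_mul, map_mul, hv, mul_inv_rev, mul_right_inj]
      exact (inv_inv _).symm

end

/-- Let `G = H ⋊ ℤ` (witnessed by a surjection `f : G → ℤ` with a splitting `s`),
with `H = ker f` finitely generated. If a regular language `L` over a finite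
generating set `(X, π)` of `G` evaluates onto the lexicographic positive cone
`f⁻¹(ℤ_{>0}) ∪ P_H` led by `ℤ`, then `H` is language-convex with respect to `L`:
there is `R ≥ 0` such that every prefix of a word of `L` evaluating into `H` is at
word-distance at most `R` from `H`. In particular `P_H` is a regular positive cone
of `H` with respect to some finite generating set of `H`. -/
theorem stmt8 {G : Type*} [Group G] (f : G →* Multiplicative ℤ)
    (hf : Function.Surjective f)
    (s : Multiplicative ℤ →* G) (hs : ∀ z, f (s z) = z)
    (hker : (MonoidHom.ker f).FG)
    (X : Type) [Fintype X] (π : FreeMonoid X →* G) (hπ : Function.Surjective π)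
    (PH : Set G) (hPH : IsPositiveConeIn f.ker PH)
    (L : Language X) (hL : L.IsRegular)
    (hLP : evalLang π L = {g : G | 0 < Multiplicative.toAdd (f g)} ∪ PH) :
    (∃ R : ℕ, ∀ w ∈ L, π (FreeMonoid.ofList w) ∈ f.ker →
      ∀ i ≤ w.length, ∃ v : List X, v.length ≤ R ∧
        π (FreeMonoid.ofList (w.take i)) * π (FreeMonoid.ofList v) ∈ f.ker) ∧
    HasRegularConeEval {x : f.ker | (x : G) ∈ PH} := by
  obtain ⟨Q, _, M, rfl⟩ := hL
  have hP : ∀ w ∈ M.accepts, 0 < Multiplicative.toAdd (f (π (FreeMonoid.ofList w))) ∨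
      π (FreeMonoid.ofList w) ∈ PH := by
    intro w hw
    have : π (FreeMonoid.ofList w) ∈ evalLang π M.accepts := ⟨w, hw, rfl⟩
    rwa [hLP] at this
  have hnn : ∀ w ∈ M.accepts, 0 ≤ Multiplicative.toAdd (f (π (FreeMonoid.ofList w))) := by
    intro w hw
    rcases hP w hw with h | h
    · exact h.le
    · rw [MonoidHom.mem_ker.1 (hPH.1 h)]
      rfl
  constructor
  · have hz : ∀ q : Q, ∃ zq : List X, ∀ x z : List X, M.eval x = q → x ++ z ∈ M.accepts →
        f (π (FreeMonoid.ofList (x ++ z))) = 1 → f (π (FreeMonoid.ofList (x ++ zq))) = 1 := by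
      intro q
      by_cases hq : ∃ x z : List X, M.eval x = q ∧ x ++ z ∈ M.accepts ∧
        f (π (FreeMonoid.ofList (x ++ z))) = 1
      · obtain ⟨x', z', hx', h1', h2'⟩ := hq
        exact ⟨z', fun x z hx h1 h2 =>
          height_exchange f π M hnn h1 h2 h1' h2' (hx.trans hx'.symm)⟩
      · exact ⟨[], fun x z hx h1 h2 => (hq ⟨x, z, hx, h1, h2⟩).elim⟩
    choose zq hzq using hz
    refine ⟨Finset.univ.sup fun q => (zq q).length, fun w hw hwk i _ => ?_⟩
    refine ⟨zq (M.eval (w.take i)),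
      Finset.le_sup (f := fun q => (zq q).length) (Finset.mem_univ _), ?_⟩
    have := hzq _ (w.take i) (w.drop i) rfl (by rwa [List.take_append_drop])
      (by rwa [List.take_append_drop])
    rwa [FreeMonoid.ofList_append, map_mul] at this
  · obtain ⟨k, hk0, hk⟩ := exists_stateHeight f π M hnn
    have hlang : evalLang (pathHom f s π M k) (pathDFA f s π M k).accepts =
        {x : f.ker | (x : G) ∈ PH} := by
      ext g
      constructor
      · rintro ⟨y, ⟨q, hy, hq, hkq⟩, rfl⟩
        obtain ⟨w, hw, hv⟩ := path_sound f s π M k y _ q hy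
        rw [hk0, hkq] at hv
        simp only [map_one, one_mul, inv_one, mul_one] at hv
        have hwa : w ∈ M.accepts := by
          rw [DFA.mem_accepts, DFA.eval, hw]
          exact hq
        have hw1 : f (π (FreeMonoid.ofList w)) = 1 := by
          rw [← hv]
          exact (pathHom f s π M k (FreeMonoid.ofList y)).2
        change (pathHom f s π M k (FreeMonoid.ofList y) : G) ∈ PH
        rw [hv]
        rcases hP w hwa with h | h
        · rw [hw1] at h
          exact (lt_irrefl _ h).elim
        · exact h
      · intro hg
        have hmem : (g : G) ∈ evalLang π M.accepts := by
          rw [hLP]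
          exact Or.inr hg
        obtain ⟨w, hw, hwg⟩ := hmem
        simp only at hwg
        have hw1 : f (π (FreeMonoid.ofList w)) = 1 := by
          rw [hwg]
          exact g.2
        obtain ⟨y, hy, hv⟩ := path_complete f s π M k hs hk w [] hw hw1
        have hkw : k (M.eval w) = 1 :=
          (hk w [] (by rw [List.append_nil]; exact hw) (by rw [List.append_nil]; exact hw1)).trans hw1
        refine ⟨y, ⟨_, hy, hw, hkw⟩, ?_⟩
        apply Subtype.ext
        simp only
        rw [hv]
        simp [hk0, hkw, hwg]
    refine ⟨(Q × X) ⊕ (Q × X), inferInstance, pathHom f s π M k, ?_, _,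
      ⟨Option Q, inferInstance, pathDFA f s π M k, rfl⟩, hlang⟩
    have hpos : ∀ g : f.ker, (g : G) ∈ PH → ∃ u, pathHom f s π M k u = g := by
      intro g hg
      have : g ∈ evalLang (pathHom f s π M k) (pathDFA f s π M k).accepts := by
        rw [hlang]
        exact hg
      obtain ⟨y, -, hy⟩ := this
      exact ⟨_, hy⟩
    intro g
    rcases hPH.2.2.1 g g.2 with h | h | h
    · exact hpos g h
    · obtain ⟨u, hu⟩ := hpos g⁻¹ h
      obtain ⟨v, hv⟩ := exists_pathHom_inv f s π M k u
      exact ⟨v, by rw [hv, hu, inv_inv]⟩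
    · exact ⟨1, by rw [map_one]; exact Subtype.ext h.symm⟩
end

section
/- Let q ≥ 2 and let BS(1,q) = ⟨a, b | a b a⁻¹ = b^q⟩. Then the set P₀ = { a^n (a^{−m} b^k a^{m}) : k > 0, m, n ∈ ℤ } is a positive cone relative to the cyclic subgroup ⟨a⟩, and there is a regular language over the alphabet {a, a⁻¹, b, b⁻¹} evaluating onto P₀. Consequently P = {a^n : n > 0} ∪ P₀ is a regular positive cone of BS(1,q). -/
/-- The single relator `a b a⁻¹ b^{-q}` of the Baumslag–Solitar group `BS(1,q)`,
in the free group on `Bool` with `true ↦ a` and `false ↦ b`. -/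
def bsRels (q : ℤ) : Set (FreeGroup Bool) :=
  {FreeGroup.of true * FreeGroup.of false * (FreeGroup.of true)⁻¹ * (FreeGroup.of false ^ q)⁻¹}

/-- The Baumslag–Solitar group `BS(1,q) = ⟨a, b ∣ a b a⁻¹ = b^q⟩`. -/
def BS (q : ℤ) : Type := PresentedGroup (bsRels q)

instance (q : ℤ) : Group (BS q) := inferInstanceAs (Group (PresentedGroup (bsRels q)))

/-- The generator `a` of `BS(1,q)`. -/
def bsA (q : ℤ) : BS q := PresentedGroup.of true

/-- The generator `b` of `BS(1,q)`. -/
def bsB (q : ℤ) : BS q := PresentedGroup.of false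

/-- The evaluation map from the free monoid on the alphabet `{a, a⁻¹, b, b⁻¹}`
(here `Fin 4`) onto `BS(1,q)`. -/
def bsPi (q : ℤ) : FreeMonoid (Fin 4) →* BS q :=
  FreeMonoid.lift ![bsA q, (bsA q)⁻¹, bsB q, (bsB q)⁻¹]

/-- The element `aⁿ (a⁻ᵐ bᵏ aᵐ)` of `BS(1,q)`. This form is not unique. -/
def bsNF (q n m k : ℤ) : BS q := bsA q ^ n * (bsA q ^ (-m) * bsB q ^ k * bsA q ^ m)

/-- The set `P₀` of the elements `aⁿ (a⁻ᵐ bᵏ aᵐ)` with `k > 0`. -/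
def bsP0 (q : ℤ) : Set (BS q) := {g | ∃ n m k : ℤ, 0 < k ∧ g = bsNF q n m k}

/-! ### Normal forms -/

lemma bs_rel (q : ℤ) : bsA q * bsB q * (bsA q)⁻¹ = bsB q ^ q := by
  have h : PresentedGroup.mk (bsRels q) (FreeGroup.of true * FreeGroup.of false *
      (FreeGroup.of true)⁻¹ * (FreeGroup.of false ^ q)⁻¹) = 1 :=
    PresentedGroup.one_of_mem (Set.mem_singleton _)
  rw [map_mul, map_inv, map_zpow, mul_inv_eq_one, map_mul, map_mul, map_inv] at h
  exact h

lemma bs_conj_pow (q : ℤ) (i : ℕ) (k : ℤ) :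
    bsA q ^ (i : ℤ) * bsB q ^ k * bsA q ^ (-(i : ℤ)) = bsB q ^ (q ^ i * k) := by
  induction i with
  | zero => simp
  | succ i ih =>
    have h : bsA q ^ ((i + 1 : ℕ) : ℤ) * bsB q ^ k * bsA q ^ (-((i + 1 : ℕ) : ℤ)) =
        bsA q * (bsA q ^ (i : ℤ) * bsB q ^ k * bsA q ^ (-(i : ℤ))) * (bsA q)⁻¹ := by
      push_cast
      group
    rw [h, ih, ← conj_zpow, bs_rel, ← zpow_mul]
    congr 1
    ring

lemma bsNF_raise (q n m k : ℤ) (i : ℕ) : bsNF q n m k = bsNF q n (m + i) (q ^ i * k) := by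
  rw [bsNF, bsNF, ← bs_conj_pow]
  group

/-- Moving `aⁿ'` to the left past `a⁻ᵐ bᵏ aᵐ` replaces `m` by `m + n'`. Once this agrees with the
`m` of the second factor, the exponents of `b` add up. -/
lemma bsNF_mul_aligned (q n n' m k k' : ℤ) :
    bsNF q n m k * bsNF q n' (m + n') k' = bsNF q (n + n') (m + n') (k + k') := by
  simp only [bsNF, zpow_add, neg_add, zpow_neg]
  group

lemma bsNF_mul (q n m k n' m' k' : ℤ) : ∃ (M : ℤ) (i j : ℕ),
    bsNF q n m k * bsNF q n' m' k' = bsNF q (n + n') M (q ^ i * k + q ^ j * k') := by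
  obtain ⟨i, j, h⟩ : ∃ i j : ℕ, m' + j = m + i + n' :=
    ⟨(m' - m - n').toNat, (m + n' - m').toNat, by omega⟩
  refine ⟨m + i + n', i, j, ?_⟩
  rw [bsNF_raise q n m k i, bsNF_raise q n' m' k' j, h, bsNF_mul_aligned]

lemma bsNF_inv (q n m k : ℤ) : (bsNF q n m k)⁻¹ = bsNF q (-n) (m - n) (-k) := by
  simp only [bsNF]
  group

lemma bsNF_zero (q n m : ℤ) : bsNF q n m 0 = bsA q ^ n := by
  simp [bsNF]

lemma exists_eq_bsNF (q : ℤ) (g : BS q) : ∃ n m k : ℤ, g = bsNF q n m k := by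
  let H : Subgroup (BS q) :=
    { carrier := {g | ∃ n m k : ℤ, g = bsNF q n m k}
      mul_mem' := by
        rintro _ _ ⟨n, m, k, rfl⟩ ⟨n', m', k', rfl⟩
        obtain ⟨M, i, j, h⟩ := bsNF_mul q n m k n' m' k'
        exact ⟨_, _, _, h⟩
      one_mem' := ⟨0, 0, 0, by simp [bsNF]⟩
      inv_mem' := by
        rintro _ ⟨n, m, k, rfl⟩
        exact ⟨_, _, _, bsNF_inv q n m k⟩ }
  refine PresentedGroup.generated_by (bsRels q) H (fun x => ?_) g
  cases x
  · exact ⟨0, 0, 1, by simp only [bsNF, zpow_zero, neg_zero, zpow_one, one_mul, mul_one]; rfl⟩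
  · exact ⟨1, 0, 0, by simp only [bsNF, zpow_zero, neg_zero, zpow_one, mul_one]; rfl⟩

/-! ### The affine action on the rationals -/

/-- The action of `BS(1,q)` on `ℚ` with `a : x ↦ q x` and `b : x ↦ x + 1`. -/
def bsAct (q : ℤ) (hq : q ≠ 0) : BS q →* Equiv.Perm ℚ :=
  PresentedGroup.toGroup
    (f := fun t : Bool => if t then Equiv.mulLeft₀ (q : ℚ) (Int.cast_ne_zero.2 hq)
      else Equiv.addRight 1) (by
    rintro r rfl
    have hq' : (q : ℚ) ≠ 0 := Int.cast_ne_zero.2 hq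
    ext x
    simp [Equiv.Perm.mul_apply, Equiv.Perm.inv_def, Equiv.mulLeft₀]
    field_simp
    ring)

lemma bsAct_a (q : ℤ) (hq : q ≠ 0) (n : ℤ) (x : ℚ) :
    bsAct q hq (bsA q ^ n) x = (q : ℚ) ^ n * x := by
  have hq' : (q : ℚ) ≠ 0 := Int.cast_ne_zero.2 hq
  have h (y : ℚ) : bsAct q hq (bsA q) y = q * y :=
    congrArg (fun σ : Equiv.Perm ℚ => σ y) (PresentedGroup.toGroup.of _)
  have h' (y : ℚ) : bsAct q hq (bsA q)⁻¹ y = (q : ℚ)⁻¹ * y := by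
    rw [map_inv, Equiv.Perm.inv_eq_iff_eq, h, mul_inv_cancel_left₀ hq']
  induction n generalizing x with
  | zero => simp
  | succ i ih =>
    rw [zpow_add_one, map_mul, Equiv.Perm.mul_apply, ih, h, zpow_add_one₀ hq', mul_assoc]
  | pred i ih =>
    rw [zpow_sub_one, map_mul, Equiv.Perm.mul_apply, ih, h', zpow_sub_one₀ hq', mul_assoc]

lemma bsAct_b (q : ℤ) (hq : q ≠ 0) (k : ℤ) (x : ℚ) :
    bsAct q hq (bsB q ^ k) x = x + k := by
  have h : bsAct q hq (bsB q) = Equiv.addRight 1 := PresentedGroup.toGroup.of _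
  rw [map_zpow, h]
  simp

lemma bsAct_NF_zero (q : ℤ) (hq : q ≠ 0) (n m k : ℤ) :
    bsAct q hq (bsNF q n m k) 0 = (q : ℚ) ^ n * ((q : ℚ) ^ (-m) * k) := by
  simp only [bsNF, map_mul, Equiv.Perm.mul_apply, bsAct_a, bsAct_b]
  simp

/-! ### The positive cones -/

section

variable {q : ℤ}

lemma bsP0_mul (hq : 2 ≤ q) {g h : BS q} (hg : g ∈ bsP0 q) (hh : h ∈ bsP0 q) :
    g * h ∈ bsP0 q := by
  obtain ⟨n, m, k, hk, rfl⟩ := hg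
  obtain ⟨n', m', k', hk', rfl⟩ := hh
  obtain ⟨M, i, j, h⟩ := bsNF_mul q n m k n' m' k'
  have : 0 < q := by omega
  exact ⟨_, _, _, by positivity, h⟩

lemma zpow_mul_bsP0 (c : ℤ) {g : BS q} (hg : g ∈ bsP0 q) : bsA q ^ c * g ∈ bsP0 q := by
  obtain ⟨n, m, k, hk, rfl⟩ := hg
  exact ⟨c + n, m, k, hk, by simp only [bsNF]; group⟩

lemma bsP0_mul_zpow (c : ℤ) {g : BS q} (hg : g ∈ bsP0 q) : g * bsA q ^ c ∈ bsP0 q := by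
  obtain ⟨n, m, k, hk, rfl⟩ := hg
  exact ⟨n + c, m + c, k, hk, by simp only [bsNF]; group⟩

lemma bsB_mem_bsP0 : bsB q ∈ bsP0 q := ⟨0, 0, 1, one_pos, by simp [bsNF]⟩

lemma bsP0_act (hq : 2 ≤ q) {g : BS q} (hg : g ∈ bsP0 q) :
    0 < bsAct q (by omega) g 0 := by
  obtain ⟨n, m, k, hk, rfl⟩ := hg
  rw [bsAct_NF_zero]
  have : (0 : ℚ) < q := by exact_mod_cast (by omega : 0 < q)
  have : (0 : ℚ) < k := by exact_mod_cast hk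
  positivity

lemma bsP0_inv_act (hq : 2 ≤ q) {g : BS q} (hg : g ∈ bsP0 q) :
    bsAct q (by omega) g⁻¹ 0 < 0 := by
  obtain ⟨n, m, k, hk, rfl⟩ := hg
  rw [bsNF_inv, bsAct_NF_zero]
  have : (0 : ℚ) < q := by exact_mod_cast (by omega : 0 < q)
  have : (0 : ℚ) < k := by exact_mod_cast hk
  push_cast
  rw [mul_neg, mul_neg, neg_lt_zero]
  positivity

lemma bsA_zpow_eq_one (hq : 2 ≤ q) {n : ℤ} (h : bsA q ^ n = 1) : n = 0 := by
  have h1 := bsAct_a q (by omega) n 1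
  rw [h, (bsAct q _).map_one, Equiv.Perm.one_apply, mul_one] at h1
  have hq1 : (1 : ℚ) < q := by exact_mod_cast (by omega : 1 < q)
  exact (zpow_eq_one_iff_right₀ (by linarith) hq1.ne').1 h1.symm

lemma bsP0_notMem (hq : 2 ≤ q) {g : BS q} (hg : g ∈ bsP0 q) (n : ℤ) : g ≠ bsA q ^ n := by
  rintro rfl
  have := bsP0_act hq hg
  rw [bsAct_a, mul_zero] at this
  exact this.false

lemma bsP0_inv_notMem (hq : 2 ≤ q) {g : BS q} (hg : g ∈ bsP0 q) : g⁻¹ ∉ bsP0 q :=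
  fun h => (bsP0_inv_act hq hg).asymm (bsP0_act hq h)

lemma bsP0_total (g : BS q) : g ∈ bsP0 q ∨ g⁻¹ ∈ bsP0 q ∨ ∃ n : ℤ, g = bsA q ^ n := by
  obtain ⟨n, m, k, rfl⟩ := exists_eq_bsNF q g
  rcases lt_trichotomy k 0 with hk | rfl | hk
  · exact Or.inr (Or.inl ⟨_, _, _, neg_pos.2 hk, bsNF_inv q n m k⟩)
  · exact Or.inr (Or.inr ⟨n, bsNF_zero q n m⟩)
  · exact Or.inl ⟨n, m, k, hk, rfl⟩

lemma bsP0_isRelPositiveCone (hq : 2 ≤ q) :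
    IsRelPositiveCone (Subgroup.zpowers (bsA q)) (bsP0 q) := by
  refine ⟨fun g hg h hh => bsP0_mul hq hg hh, fun g => ?_, fun g => bsP0_inv_notMem hq, ?_⟩
  · rcases bsP0_total g with h | h | ⟨n, h⟩
    · exact Or.inl h
    · exact Or.inr (Or.inl h)
    · exact Or.inr (Or.inr ⟨n, h.symm⟩)
  · rintro g hg ⟨n, hn⟩
    exact bsP0_notMem hq hg n hn.symm

lemma bsP_isPositiveCone (hq : 2 ≤ q) :
    IsPositiveCone ({g : BS q | ∃ n : ℤ, 0 < n ∧ g = bsA q ^ n} ∪ bsP0 q) := by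
  refine ⟨?_, fun g => ?_, ?_, ?_⟩
  · rintro _ (⟨n, hn, rfl⟩ | hg) _ (⟨n', hn', rfl⟩ | hh)
    · exact Or.inl ⟨n + n', by omega, (zpow_add _ _ _).symm⟩
    · exact Or.inr (zpow_mul_bsP0 n hh)
    · exact Or.inr (bsP0_mul_zpow n' hg)
    · exact Or.inr (bsP0_mul hq hg hh)
  · rcases bsP0_total g with h | h | ⟨n, rfl⟩
    · exact Or.inl (Or.inr h)
    · exact Or.inr (Or.inl (Or.inr h))
    · rcases lt_trichotomy n 0 with hn | rfl | hn
      · exact Or.inr (Or.inl (Or.inl ⟨-n, by omega, (zpow_neg _ _).symm⟩))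
      · exact Or.inr (Or.inr (zpow_zero _))
      · exact Or.inl (Or.inl ⟨n, hn, rfl⟩)
  · rintro g (⟨n, hn, rfl⟩ | hg) (⟨n', hn', h⟩ | hg')
    · have := bsA_zpow_eq_one hq (n := n + n') (by rw [zpow_add, ← h, mul_inv_cancel])
      omega
    · exact bsP0_notMem hq hg' (-n) (zpow_neg _ _).symm
    · exact bsP0_notMem hq hg (-n') (by rw [zpow_neg, ← h, inv_inv])
    · exact bsP0_inv_notMem hq hg hg'
  · rintro (⟨n, hn, h⟩ | h)
    · exact hn.ne' (bsA_zpow_eq_one hq h.symm)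
    · exact bsP0_notMem hq h 0 (zpow_zero _).symm

/-! ### Regular languages -/

/-- The language `S*` of all words with letters in `S`. -/
def allIn {X : Type*} (S : Set X) : Language X := {w : List X | ∀ x ∈ w, x ∈ S}

open Classical in
lemma allIn_isRegular {X : Type*} (S : Set X) : (allIn S).IsRegular := by
  -- The automaton records whether all letters read so far are in `S`.
  let M : DFA X Bool := ⟨fun s x => s && decide (x ∈ S), true, {true}⟩
  refine ⟨Bool, inferInstance, M, ?_⟩
  have key : ∀ (w : List X) (s : Bool), M.evalFrom s w = true ↔ s = true ∧ ∀ x ∈ w, x ∈ S := by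
    intro w
    induction w with
    | nil => simp [DFA.evalFrom]
    | cons x w ih =>
      intro s
      rw [DFA.evalFrom_cons, ih]
      simp [M, and_assoc]
  ext w
  exact (key w true).trans (by simp [allIn]; rfl)

/-- The words in `a, a⁻¹, b` with at least one letter `b`. -/
def langP0 : Language (Fin 4) := allIn {x | x ≠ 3} ⊓ (allIn {x | x ≠ 2})ᶜ

/-- The words `aⁿ` with `n > 0`. -/
def langA : Language (Fin 4) := allIn {x | x = 0} ⊓ (allIn ∅)ᶜ

lemma mem_langP0 (w : List (Fin 4)) : w ∈ langP0 ↔ 3 ∉ w ∧ 2 ∈ w := by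
  change (∀ x ∈ w, x ≠ 3) ∧ ¬ (∀ x ∈ w, x ≠ 2) ↔ _
  simp [← List.forall_mem_ne']

lemma mem_langA (w : List (Fin 4)) : w ∈ langA ↔ (∀ x ∈ w, x = 0) ∧ w ≠ [] := by
  change (∀ x ∈ w, x = 0) ∧ ¬ (∀ x ∈ w, x ∈ (∅ : Set (Fin 4))) ↔ _
  simp [List.eq_nil_iff_forall_not_mem]

lemma langP0_isRegular : langP0.IsRegular :=
  (allIn_isRegular _).inf (allIn_isRegular _).compl

lemma langA_isRegular : langA.IsRegular :=
  (allIn_isRegular _).inf (allIn_isRegular _).compl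

/-! ### Evaluation of words -/

lemma bsPi_replicate (n : ℕ) (x : Fin 4) :
    bsPi q (FreeMonoid.ofList (List.replicate n x)) =
      ![bsA q, (bsA q)⁻¹, bsB q, (bsB q)⁻¹] x ^ n := by
  simp [bsPi, FreeMonoid.lift_apply]

lemma exists_word_zpow_a (n : ℤ) :
    ∃ w : List (Fin 4), (∀ x ∈ w, x = 0 ∨ x = 1) ∧ bsPi q (FreeMonoid.ofList w) = bsA q ^ n := by
  obtain ⟨k, rfl | rfl⟩ := n.eq_nat_or_neg
  · refine ⟨List.replicate k 0, fun x hx => Or.inl (List.eq_of_mem_replicate hx), ?_⟩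
    simp [bsPi_replicate]
  · refine ⟨List.replicate k 1, fun x hx => Or.inr (List.eq_of_mem_replicate hx), ?_⟩
    simp [bsPi_replicate]

lemma bsPi_surjective : Function.Surjective (bsPi q) := by
  intro g
  obtain ⟨n, m, k, rfl⟩ := exists_eq_bsNF q g
  have hA (n : ℤ) : bsA q ^ n ∈ MonoidHom.mrange (bsPi q) := by
    obtain ⟨w, -, hw⟩ := exists_word_zpow_a (q := q) n
    exact ⟨_, hw⟩
  have hB : bsB q ^ k ∈ MonoidHom.mrange (bsPi q) := by
    obtain ⟨i, rfl | rfl⟩ := k.eq_nat_or_neg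
    · exact ⟨FreeMonoid.ofList (List.replicate i 2), by simp [bsPi_replicate]⟩
    · exact ⟨FreeMonoid.ofList (List.replicate i 3), by simp [bsPi_replicate]⟩
  exact mul_mem (hA _) (mul_mem (mul_mem (hA _) hB) (hA _))

/-- A word without `b⁻¹` evaluates into `P₀` if it contains `b`, and to a power of `a` if not. -/
lemma bsPi_of_notMem (hq : 2 ≤ q) (w : List (Fin 4)) (hw : 3 ∉ w) :
    (2 ∈ w → bsPi q (FreeMonoid.ofList w) ∈ bsP0 q) ∧
      (2 ∉ w → ∃ n : ℤ, bsPi q (FreeMonoid.ofList w) = bsA q ^ n) := by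
  induction w with
  | nil => exact ⟨by simp, fun _ => ⟨0, by simp⟩⟩
  | cons x w ih =>
    obtain ⟨hx, hw⟩ : 3 ≠ x ∧ 3 ∉ w := by simpa using hw
    obtain ⟨ih₁, ih₂⟩ := ih hw
    rw [FreeMonoid.ofList_cons, map_mul]
    fin_cases x
    · have h0 : bsPi q (FreeMonoid.of 0) = bsA q ^ (1 : ℤ) := by simp [bsPi]
      refine ⟨fun h => ?_, fun h => ?_⟩
      · have h' := zpow_mul_bsP0 1 (ih₁ (by simpa using h))
        rw [← h0] at h'
        exact h'
      · obtain ⟨n, hn⟩ := ih₂ (by simpa using h)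
        exact ⟨1 + n, by rw [zpow_add, ← hn, ← h0]; rfl⟩
    · have h1 : bsPi q (FreeMonoid.of 1) = bsA q ^ (-1 : ℤ) := by simp [bsPi]
      refine ⟨fun h => ?_, fun h => ?_⟩
      · have h' := zpow_mul_bsP0 (-1) (ih₁ (by simpa using h))
        rw [← h1] at h'
        exact h'
      · obtain ⟨n, hn⟩ := ih₂ (by simpa using h)
        exact ⟨-1 + n, by rw [zpow_add, ← hn, ← h1]; rfl⟩
    · have h2 : bsPi q (FreeMonoid.of 2) = bsB q := by simp [bsPi]
      refine ⟨fun _ => ?_, fun h => absurd List.mem_cons_self h⟩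
      change bsPi q (FreeMonoid.of 2) * _ ∈ _
      rw [h2]
      by_cases h : 2 ∈ w
      · exact bsP0_mul hq bsB_mem_bsP0 (ih₁ h)
      · obtain ⟨n, hn⟩ := ih₂ h
        rw [hn]
        exact bsP0_mul_zpow n bsB_mem_bsP0
    · exact absurd rfl hx

lemma evalLang_langP0 (hq : 2 ≤ q) : evalLang (bsPi q) langP0 = bsP0 q := by
  apply Set.Subset.antisymm
  · rintro _ ⟨w, hw, rfl⟩
    obtain ⟨h3, h2⟩ := (mem_langP0 w).1 hw
    exact (bsPi_of_notMem hq w h3).1 h2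
  · rintro _ ⟨n, m, k, hk, rfl⟩
    obtain ⟨u, hu, hu'⟩ := exists_word_zpow_a (q := q) (n - m)
    obtain ⟨v, hv, hv'⟩ := exists_word_zpow_a (q := q) m
    lift k to ℕ using hk.le
    refine ⟨u ++ List.replicate k 2 ++ v, (mem_langP0 _).2 ⟨fun h => ?_, ?_⟩, ?_⟩
    · rcases List.mem_append.1 h with h | h
      · rcases List.mem_append.1 h with h | h
        · simpa using hu _ h
        · simpa using List.eq_of_mem_replicate h
      · simpa using hv _ h
    · have : k ≠ 0 := by omega
      simp [this]
    · simp only [FreeMonoid.ofList_append, map_mul, hu', hv', bsPi_replicate, bsNF]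
      simp [sub_eq_add_neg, zpow_add, mul_assoc]

lemma evalLang_langA :
    evalLang (bsPi q) langA = {g : BS q | ∃ n : ℤ, 0 < n ∧ g = bsA q ^ n} := by
  apply Set.Subset.antisymm
  · rintro _ ⟨w, hw, rfl⟩
    obtain ⟨h0, hne⟩ := (mem_langA w).1 hw
    refine ⟨w.length, by simpa [List.length_pos_iff] using hne, ?_⟩
    dsimp only
    rw [List.eq_replicate_of_mem h0, bsPi_replicate]
    simp
  · rintro _ ⟨n, hn, rfl⟩
    lift n to ℕ using hn.le
    refine ⟨List.replicate n 0, (mem_langA _).2 ⟨fun x => List.eq_of_mem_replicate, ?_⟩, ?_⟩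
    · simp; omega
    · simp [bsPi_replicate]

end

/-- For `q ≥ 2`, in `BS(1,q)` the set `P₀ = {aⁿ(a^{-m} b^k a^m) : k > 0, m, n ∈ ℤ}` is a
positive cone relative to `⟨a⟩`, it is the evaluation of a regular language over the
generating alphabet `{a, a⁻¹, b, b⁻¹}`, and `P = {aⁿ : n > 0} ∪ P₀` is a regular
positive cone of `BS(1,q)`. -/
theorem stmt9 (q : ℤ) (hq : 2 ≤ q) :
    Function.Surjective (bsPi q) ∧
    IsRelPositiveCone (Subgroup.zpowers (bsA q))
      {g : BS q | ∃ n m k : ℤ, 0 < k ∧ g = bsA q ^ n * (bsA q ^ (-m) * bsB q ^ k * bsA q ^ m)} ∧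
    (∃ L : Language (Fin 4), L.IsRegular ∧
      evalLang (bsPi q) L =
        {g : BS q | ∃ n m k : ℤ, 0 < k ∧
          g = bsA q ^ n * (bsA q ^ (-m) * bsB q ^ k * bsA q ^ m)}) ∧
    IsPositiveCone ({g : BS q | ∃ n : ℤ, 0 < n ∧ g = bsA q ^ n} ∪
      {g : BS q | ∃ n m k : ℤ, 0 < k ∧
        g = bsA q ^ n * (bsA q ^ (-m) * bsB q ^ k * bsA q ^ m)}) ∧
    (∃ L : Language (Fin 4), L.IsRegular ∧
      evalLang (bsPi q) L =
        {g : BS q | ∃ n : ℤ, 0 < n ∧ g = bsA q ^ n} ∪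
        {g : BS q | ∃ n m k : ℤ, 0 < k ∧
          g = bsA q ^ n * (bsA q ^ (-m) * bsB q ^ k * bsA q ^ m)}) := by
  exact ⟨bsPi_surjective, bsP0_isRelPositiveCone hq,
    ⟨langP0, langP0_isRegular, evalLang_langP0 hq⟩, bsP_isPositiveCone hq,
    ⟨langA + langP0, langA_isRegular.add langP0_isRegular,
      (Set.image_union _ _ _).trans (congrArg₂ _ evalLang_langA (evalLang_langP0 hq))⟩⟩
end
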